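/- arXiv:2112.05836 — 2 statements merged into one kernel-verified Lean document; each statement's English description precedes it below -/
import Mathlib

section
/- Fix integers k ≥ 2, ℓ ≥ 1, and 1 ≤ m < n. Let X_1, …, X_{k−1} be lists of n strings each and let Y be a list of m strings, where every string occurring in these lists has length exactly ℓ and is over an alphabet Σ. Suppose there is an integer z such that for every choice of strings S_1 ∈ X_1, …, S_{k−1} ∈ X_{k−1}, S_y ∈ Y, the value LCS(S_1, …, S_{k−1}, S_y) is either z or z+1. Let $_1, …, $_k, %, @ be k+2 pairwise distinct symbols not in Σ, and set A = $_1^{2ℓ} · $_2^{2ℓ} ⋯ $_k^{2ℓ}, A_{−i} = A with the block $_i^{2ℓ} removed, B = %^{2ℓ}, f = n − m, and D = 2ℓ(2m + (k−1)n) + (z+1)m. Define AG_i(X_i) = A_{−i}^f · (A · X_i[1] · B) · (A · X_i[2] · B) ⋯ (A · X_i[n] · B) · A_{−i}^f for i ∈ [1..k−1], AG_y(Y) = A_{−k}^f · (A · Y[1] · B) ⋯ (A · Y[m] · B) · A_{−k}^f, and SAG_i(X_i) = @^{D−1} · AG_i(X_i), SAG_y(Y) = AG_y(Y) · @^{D−1}.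 Call a perfect alignment a choice of offsets Δ_1, …, Δ_{k−1} ∈ [0..n−m]; index j ∈ [1..m] is a good tuple of this alignment if LCS(X_1[Δ_1+j], …, X_{k−1}[Δ_{k−1}+j], Y[j]) = z+1. If some perfect alignment has all m of its indices good, then LCS(SAG_1(X_1), …, SAG_{k−1}(X_{k−1}), SAG_y(Y)) = D; and if every perfect alignment has fewer than m good indices, then LCS(SAG_1(X_1), …, SAG_{k−1}(X_{k−1}), SAG_y(Y)) = D − 1. -/
/-- The length of a longest common subsequence of a family of strings. -/
noncomputable def lcsLen {α : Type*} (L : List (List α)) : ℕ :=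
  sSup { m : ℕ | ∃ T : List α, T.length = m ∧ ∀ s ∈ L, T.Sublist s }

/-- `strPow W f` is the concatenation `W^f` of `f` copies of the string `W`. -/
def strPow {β : Type*} (W : List β) (f : ℕ) : List β :=
  (List.replicate f W).flatten

/-- The string `A = $₁^{2ℓ} · $₂^{2ℓ} ⋯ $_k^{2ℓ}`. -/
def gadgetA {β : Type*} (k ℓ : ℕ) (dollar : Fin k → β) : List β :=
  (List.ofFn fun j : Fin k => List.replicate (2 * ℓ) (dollar j)).flatten

/-- The string `A₋ᵢ`: `A` with the block `$ᵢ^{2ℓ}` removed. -/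
def gadgetAminus {β : Type*} (k ℓ : ℕ) (dollar : Fin k → β) (i : Fin k) : List β :=
  (List.ofFn fun j : Fin k =>
    if j = i then [] else List.replicate (2 * ℓ) (dollar j)).flatten

/-- The alignment gadget
`AG_i(X) = A₋ᵢ^f · (A · X[1] · B) · (A · X[2] · B) ⋯ (A · X[n] · B) · A₋ᵢ^f`
where `B = %^{2ℓ}`. -/
def gadgetAG {β : Type*} (k ℓ : ℕ) (dollar : Fin k → β) (percent : β)
    (i : Fin k) (f : ℕ) {n : ℕ} (X : Fin n → List β) : List β :=
  strPow (gadgetAminus k ℓ dollar i) f ++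
    (List.ofFn fun j : Fin n =>
      gadgetA k ℓ dollar ++ X j ++ List.replicate (2 * ℓ) percent).flatten ++
    strPow (gadgetAminus k ℓ dollar i) f

/-- The selected alignment gadget `SAG_i(X) = @^{D−1} · AG_i(X)`. -/
def gadgetSAGx {β : Type*} (k ℓ : ℕ) (dollar : Fin k → β) (percent atSym : β)
    (D : ℕ) (i : Fin k) (f : ℕ) {n : ℕ} (X : Fin n → List β) : List β :=
  List.replicate (D - 1) atSym ++ gadgetAG k ℓ dollar percent i f X

/-- The selected alignment gadget `SAG_y(Y) = AG_y(Y) · @^{D−1}`. -/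
def gadgetSAGy {β : Type*} (k ℓ : ℕ) (dollar : Fin k → β) (percent atSym : β)
    (D : ℕ) (i : Fin k) (f : ℕ) {m : ℕ} (Y : Fin m → List β) : List β :=
  gadgetAG k ℓ dollar percent i f Y ++ List.replicate (D - 1) atSym

/-!
Every letter of a common subsequence `T` of the alignment gadgets is labelled by the segment it is
matched to: a copy of `A`, a string of the list, a copy of `B` or a padding. Since `$ᵢ` is missing
from the paddings of `AG_i`, the `$ᵢ` of `T` lie in the `n` copies of `A` next to the strings of
`X_i` for `i < k`, and in `m` copies for `i = k`; with the `m` copies of `B`, this allows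
`2ℓ(2m + (k-1)n)` letters outside the strings of `Y`. A string of `Y` contributes at most `z + 1`
letters, unless `T` matches it to several strings of some `X_i`. In that case it contributes up to
`ℓ`, but the copy of `A` in between is skipped at a cost of `2ℓ`. Hence `T` has at most `D` letters.

If `T` has exactly `D` letters, then no string of `Y` is split and every block is used completely.
The copy of `B` after `Y[j]` forces the partner of `Y[j + 1]` in `X_i` past that of `Y[j]`, and the
blocks of `$ᵢ` prevent `X_i` from skipping a string, because the single copy of `A` between `Y[j]`
and `Y[j + 1]` can match only one of them. So the matched strings form a perfect alignment with all
indices good. Conversely, such an alignment leaves `n - m` unmatched copies of `A` in each `AG_i`,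
whose `$ᵢ`-blocks are matched to the paddings of `AG_y`, which contain `$ᵢ` for every `i < k`.

The blocks of `@` stand at opposite ends of the selected gadgets, so a common subsequence containing
`@` contains nothing else, and the two kinds of subsequences compete for the maximum of `D - 1` and
the common subsequence length of the alignment gadgets.
-/

open scoped List Finset

section LongestCommonSubsequence

variable {α : Type*} {N r : ℕ} {c : α}

theorem le_lcsLen_iff {L : List (List α)} (hL : L ≠ []) :
    N ≤ lcsLen L ↔ ∃ T : List α, T.length = N ∧ ∀ s ∈ L, T <+ s := by
  set lengths := {N : ℕ | ∃ T : List α, T.length = N ∧ ∀ s ∈ L, T <+ s}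
  have hbdd : BddAbove lengths := by
    obtain ⟨s, hs⟩ := List.exists_mem_of_ne_nil L hL
    exact ⟨s.length, by rintro _ ⟨T, rfl, hT⟩; exact (hT s hs).length_le⟩
  refine ⟨fun hN => ?_, fun hT => le_csSup hbdd hT⟩
  obtain ⟨T, hTlen, hT⟩ : lcsLen L ∈ lengths :=
    Nat.sSup_mem ⟨0, [], rfl, fun _ _ => List.nil_sublist _⟩ hbdd
  exact ⟨T.take N, by rw [List.length_take]; omega, fun s hs => (T.take_sublist N).trans (hT s hs)⟩

theorem le_lcsLen_ofFn_append_singleton_iff {K : ℕ} {S : Fin K → List α} {y : List α} :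
    N ≤ lcsLen (List.ofFn S ++ [y]) ↔
      ∃ T : List α, T.length = N ∧ (∀ i, T <+ S i) ∧ T <+ y := by
  simp only [le_lcsLen_iff (List.append_ne_nil_of_right_ne_nil _ (List.cons_ne_nil y [])),
    List.forall_mem_append, List.forall_mem_ofFn_iff, List.forall_mem_singleton]

theorem length_le_of_sublist_replicate_append_of_mem {G H T : List α} (hG : c ∉ G) (hH : c ∉ H)
    (hc : c ∈ T) (hTG : T <+ List.replicate r c ++ G) (hTH : T <+ H ++ List.replicate r c) :
    T.length ≤ r := by
  obtain ⟨T₁, T₂, rfl, hT₁, hT₂⟩ := List.sublist_append_iff.1 hTG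
  obtain ⟨q, -, rfl⟩ := List.sublist_replicate_iff.1 hT₁
  obtain ⟨S₁, S₂, hS, hS₁, hS₂⟩ := List.sublist_append_iff.1 hTH
  have hq : q ≠ 0 := by
    rintro rfl
    exact hG (hT₂.subset (by simpa using hc))
  obtain rfl : S₁ = [] := by
    cases S₁ with
    | nil => rfl
    | cons x S₁ =>
      obtain ⟨q, rfl⟩ := Nat.exists_eq_succ_of_ne_zero hq
      rw [List.replicate_succ, List.cons_append, List.cons_append, List.cons.injEq] at hS
      exact (hH (hS₁.subset (hS.1 ▸ List.mem_cons_self))).elim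
  simpa [hS] using hS₂.length_le

theorem lcsLen_replicate_append {K : ℕ} (hK : K ≠ 0) {G : Fin K → List α} {H : List α}
    (hG : ∀ i, c ∉ G i) (hH : c ∉ H) :
    lcsLen ((List.ofFn fun i => List.replicate r c ++ G i) ++ [H ++ List.replicate r c]) =
      max r (lcsLen (List.ofFn G ++ [H])) := by
  refine eq_of_forall_le_iff fun N => ?_
  rw [le_max_iff, le_lcsLen_ofFn_append_singleton_iff, le_lcsLen_ofFn_append_singleton_iff]
  constructor
  · rintro ⟨T, rfl, hTG, hTH⟩
    by_cases hc : c ∈ T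
    · exact .inl (length_le_of_sublist_replicate_append_of_mem
        (hG ⟨0, Nat.pos_of_ne_zero hK⟩) hH hc (hTG _) hTH)
    · have hT : ∀ a ∈ T, a ∉ List.replicate r c :=
        fun a ha ha' => hc (List.eq_of_mem_replicate ha' ▸ ha)
      exact .inr ⟨T, rfl, fun i => (hTG i).of_sublist_append_right hT,
        hTH.of_sublist_append_left hT⟩
  · rintro (hN | ⟨T, rfl, hTG, hTH⟩)
    · have hrep : List.replicate N c <+ List.replicate r c :=
        (List.replicate_sublist_replicate c).2 hN
      exact ⟨List.replicate N c, List.length_replicate,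
        fun i => hrep.trans (List.sublist_append_left _ _),
        hrep.trans (List.sublist_append_right _ _)⟩
    · exact ⟨T, rfl, fun i => (hTG i).trans (List.sublist_append_right _ _),
        hTH.trans (List.sublist_append_left _ _)⟩

end LongestCommonSubsequence

section DollarBlocks

variable {β : Type*} {k ℓ f : ℕ} {dollar : Fin k → β} {S : Finset (Fin k)} {i : Fin k} {c : β}

theorem flatten_ofFn_sublist_flatten_ofFn {n : ℕ} {g h : Fin n → List β} (hgh : ∀ t, g t <+ h t) :
    (List.ofFn g).flatten <+ (List.ofFn h).flatten := by
  simp only [List.ofFn_eq_map, ← List.flatMap_def]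
  exact List.Sublist.flatMap_right _ fun t _ => hgh t

/-- The subsequence of `A` formed by the blocks `$ⱼ^{2ℓ}` with `j ∈ S`. -/
def dollarBlocks (ℓ : ℕ) (dollar : Fin k → β) (S : Finset (Fin k)) : List β :=
  (List.ofFn fun j => if j ∈ S then List.replicate (2 * ℓ) (dollar j) else []).flatten

theorem gadgetA_eq_dollarBlocks : gadgetA k ℓ dollar = dollarBlocks ℓ dollar Finset.univ := by
  simp [gadgetA, dollarBlocks]

theorem gadgetAminus_eq_dollarBlocks :
    gadgetAminus k ℓ dollar i = dollarBlocks ℓ dollar {i}ᶜ := by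
  simp only [gadgetAminus, dollarBlocks, Finset.mem_compl, Finset.mem_singleton, ite_not]

theorem strPow_eq_flatten_ofFn (W : List β) :
    strPow W f = (List.ofFn fun _ : Fin f => W).flatten := by
  rw [strPow, List.ofFn_const]

theorem strPow_sublist_strPow (W : List β) {f' : ℕ} (hf : f ≤ f') : strPow W f <+ strPow W f' :=
  ((List.replicate_sublist_replicate W).2 hf).flatten

theorem dollarBlocks_sublist_dollarBlocks {S' : Finset (Fin k)} (hS : S ⊆ S') :
    dollarBlocks ℓ dollar S <+ dollarBlocks ℓ dollar S' := by
  refine flatten_ofFn_sublist_flatten_ofFn fun j => ?_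
  by_cases hj : j ∈ S
  · simp [hj, hS hj]
  · simp [hj]

theorem dollarBlocks_sublist_gadgetA : dollarBlocks ℓ dollar S <+ gadgetA k ℓ dollar :=
  gadgetA_eq_dollarBlocks ▸ dollarBlocks_sublist_dollarBlocks S.subset_univ

theorem dollarBlocks_sublist_gadgetAminus (hi : i ∉ S) :
    dollarBlocks ℓ dollar S <+ gadgetAminus k ℓ dollar i :=
  gadgetAminus_eq_dollarBlocks ▸ dollarBlocks_sublist_dollarBlocks (by simpa using hi)

theorem length_dollarBlocks : (dollarBlocks ℓ dollar S).length = 2 * ℓ * #S := by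
  simp [dollarBlocks, List.map_ofFn, List.sum_ofFn, apply_ite List.length, mul_comm]

theorem length_gadgetA : (gadgetA k ℓ dollar).length = 2 * ℓ * k := by
  rw [gadgetA_eq_dollarBlocks, length_dollarBlocks, Finset.card_univ, Fintype.card_fin]

theorem mem_dollarBlocks (hc : c ∈ dollarBlocks ℓ dollar S) : ∃ j ∈ S, c = dollar j := by
  simp only [dollarBlocks, List.mem_flatten, List.mem_ofFn] at hc
  obtain ⟨_, ⟨j, rfl⟩, hc⟩ := hc
  split_ifs at hc with hj
  · exact ⟨j, hj, List.eq_of_mem_replicate hc⟩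
  · simp at hc

theorem exists_eq_dollar_of_mem_gadgetA (hc : c ∈ gadgetA k ℓ dollar) : ∃ j, c = dollar j := by
  rw [gadgetA_eq_dollarBlocks] at hc
  obtain ⟨j, -, hj⟩ := mem_dollarBlocks hc
  exact ⟨j, hj⟩

theorem exists_eq_dollar_of_mem_strPow_gadgetAminus
    (hc : c ∈ strPow (gadgetAminus k ℓ dollar i) f) : ∃ j, j ≠ i ∧ c = dollar j := by
  obtain ⟨W, hW, hc⟩ := List.mem_flatten.1 hc
  rw [List.eq_of_mem_replicate hW, gadgetAminus_eq_dollarBlocks] at hc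
  simpa using mem_dollarBlocks hc

theorem count_gadgetA [DecidableEq β] (hdollar : Function.Injective dollar) (j : Fin k) :
    (gadgetA k ℓ dollar).count (dollar j) = 2 * ℓ := by
  simp [gadgetA, List.count_flatten, List.map_ofFn, List.sum_ofFn, List.count_replicate,
    hdollar.eq_iff]

end DollarBlocks

section Labelling

variable {ι β : Type*} {T : List β}

/-- The subsequence of `T` formed by the letters at the positions in `P`. -/
def subword (T : List β) (P : Finset (Fin T.length)) : List β :=
  ((List.finRange T.length).filter (· ∈ P)).map T.get

theorem length_subword (P : Finset (Fin T.length)) : (subword T P).length = #P := by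
  rw [subword, List.length_map, ← List.toFinset_card_of_nodup ((List.nodup_finRange _).filter _)]
  congr 1
  ext p
  simp

theorem subword_sublist_subword {P Q : Finset (Fin T.length)} (hPQ : P ⊆ Q) :
    subword T P <+ subword T Q :=
  (List.monotone_filter_right _ fun p hp => by simpa using hPQ (by simpa using hp)).map _

theorem subword_eq_replicate {P : Finset (Fin T.length)} {c : β} (hc : ∀ p ∈ P, T.get p = c) :
    subword T P = List.replicate #P c := by
  refine List.eq_replicate_iff.2 ⟨length_subword P, fun b hb => ?_⟩
  obtain ⟨p, hp, rfl⟩ := List.mem_map.1 hb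
  exact hc p (by simpa using hp)

variable {segs : List (ι × List β)}

/-- The concatenation of the segments, each letter paired with the name of its segment. -/
def tagged (segs : List (ι × List β)) : List (ι × β) :=
  segs.flatMap fun s => s.2.map (Prod.mk s.1)

theorem map_snd_tagged : (tagged segs).map Prod.snd = (segs.map Prod.snd).flatten := by
  simp [tagged, List.flatMap_def, Function.comp_def]

theorem mem_tagged {x : ι × β} : x ∈ tagged segs ↔ ∃ s ∈ segs, s.1 = x.1 ∧ x.2 ∈ s.2 := by
  obtain ⟨t, c⟩ := x
  simp only [tagged, List.mem_flatMap, List.mem_map, Prod.mk.injEq]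
  grind

variable [LinearOrder ι]

/-- A labelling of the letters of `T` that records an embedding of `T` into the concatenation of
the second components of `segs`: the letter at position `p` goes to the segment named `τ p`. -/
structure IsLabelling (segs : List (ι × List β)) (T : List β) (τ : Fin T.length → ι) : Prop where
  monotone : Monotone τ
  exists_mem : ∀ p, ∃ s ∈ segs, s.1 = τ p ∧ T.get p ∈ s.2
  subword_sublist : ∀ s ∈ segs, subword T {p | τ p = s.1} <+ s.2

theorem pairwise_fst_le_tagged (hsegs : segs.Pairwise (·.1 < ·.1)) :
    (tagged segs).Pairwise (·.1 ≤ ·.1) := by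
  refine List.pairwise_flatMap.2 ⟨fun s _ => ?_, hsegs.imp fun hst x hx y hy => ?_⟩
  · exact List.pairwise_map.2 (List.pairwise_of_forall fun _ _ => le_rfl)
  · obtain ⟨_, -, rfl⟩ := List.mem_map.1 hx
    obtain ⟨_, -, rfl⟩ := List.mem_map.1 hy
    exact hst.le

theorem filter_fst_eq_tagged (hsegs : segs.Pairwise (·.1 < ·.1)) {s : ι × List β} (hs : s ∈ segs) :
    (tagged segs).filter (·.1 = s.1) = s.2.map (Prod.mk s.1) := by
  induction segs with
  | nil => simp at hs
  | cons s' segs ih =>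
    obtain ⟨hs', hsegs⟩ := List.pairwise_cons.1 hsegs
    rw [tagged, List.flatMap_cons, List.filter_append, ← tagged]
    rcases List.mem_cons.1 hs with rfl | hs
    · rw [List.filter_eq_self.2 (by simp), List.filter_eq_nil_iff.2, List.append_nil]
      intro x hx
      obtain ⟨u, hu, hux, -⟩ := mem_tagged.1 hx
      simpa [← hux] using (hs' u hu).ne'
    · rw [ih hsegs hs, List.filter_eq_nil_iff.2 (by simp [(hs' s hs).ne]), List.nil_append]

theorem exists_isLabelling (hsegs : segs.Pairwise (·.1 < ·.1))
    (hT : T <+ (segs.map Prod.snd).flatten) : ∃ τ, IsLabelling segs T τ := by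
  rw [← map_snd_tagged, List.sublist_map_iff] at hT
  obtain ⟨L, hL, rfl⟩ := hT
  have hlen : (L.map Prod.snd).length = L.length := List.length_map _
  have hget : ∀ p, (L.map Prod.snd).get p = (L.get (p.cast hlen)).2 := fun p => by simp
  refine ⟨fun p => (L.get (p.cast hlen)).1, fun p q hpq => ?_, fun p => ?_, fun s hs => ?_⟩
  · exact ((pairwise_fst_le_tagged hsegs).sublist hL).rel_get_of_le hpq
  · rw [hget]
    exact mem_tagged.1 (hL.subset (List.get_mem _ _))
  · have hfilter : subword (L.map Prod.snd) {p | (L.get (p.cast hlen)).1 = s.1} =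
        (L.filter (·.1 = s.1)).map Prod.snd := by
      have hL' : (List.finRange (L.map Prod.snd).length).map (fun p => L.get (p.cast hlen)) = L :=
        List.ext_getElem (by simp) (by simp)
      conv_rhs => rw [← hL', List.filter_map, List.map_map]
      simp [subword, Function.comp_def]
    rw [hfilter]
    simpa [filter_fst_eq_tagged hsegs hs, Function.comp_def] using
      (hL.filter (·.1 = s.1)).map Prod.snd

end Labelling

section GadgetLabelling

variable {β : Type*} {k ℓ f n : ℕ} {dollar : Fin k → β} {percent : β} {i : Fin k}
  {X : Fin n → List β} {Sig : Set β} {T : List β}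

/-- The alignment gadget cut into segments. The tuple `X a` is preceded by `A` and followed by `B`,
and these three segments are named `3 * a + 1`, `3 * a + 2`, `3 * a + 3`; the paddings are named `0`
and `3 * n + 1`. -/
def gadgetSegments (ℓ : ℕ) (dollar : Fin k → β) (percent : β) (i : Fin k) (f : ℕ)
    (X : Fin n → List β) : List (ℕ × List β) :=
  (0, strPow (gadgetAminus k ℓ dollar i) f) ::
    ((List.ofFn fun a : Fin n =>
      [(3 * (a : ℕ) + 1, gadgetA k ℓ dollar), (3 * (a : ℕ) + 2, X a),
        (3 * (a : ℕ) + 3, List.replicate (2 * ℓ) percent)]).flatten ++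
    [(3 * n + 1, strPow (gadgetAminus k ℓ dollar i) f)])

theorem flatten_map_snd_gadgetSegments :
    ((gadgetSegments ℓ dollar percent i f X).map Prod.snd).flatten =
      gadgetAG k ℓ dollar percent i f X := by
  simp [gadgetSegments, gadgetAG, List.map_flatten, List.map_ofFn, Function.comp_def,
    List.flatten_flatten]

theorem mem_gadgetSegments {s : ℕ × List β} :
    s ∈ gadgetSegments ℓ dollar percent i f X ↔
      (s.1 = 0 ∨ s.1 = 3 * n + 1) ∧ s.2 = strPow (gadgetAminus k ℓ dollar i) f ∨
      ∃ a : Fin n, s = (3 * (a : ℕ) + 1, gadgetA k ℓ dollar) ∨ s = (3 * (a : ℕ) + 2, X a) ∨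
        s = (3 * (a : ℕ) + 3, List.replicate (2 * ℓ) percent) := by
  obtain ⟨t, w⟩ := s
  simp only [gadgetSegments, List.mem_cons, List.mem_append, List.mem_flatten, List.mem_ofFn,
    List.not_mem_nil, or_false, Prod.mk.injEq, exists_exists_eq_and]
  rw [or_and_right, or_assoc, or_comm (b := _ = 3 * n + 1 ∧ _)]

theorem pairwise_gadgetSegments :
    (gadgetSegments ℓ dollar percent i f X).Pairwise (·.1 < ·.1) := by
  simp only [gadgetSegments, List.pairwise_cons, List.pairwise_append, List.pairwise_flatten,
    List.pairwise_ofFn, List.mem_cons, List.mem_append, List.mem_flatten, List.mem_ofFn]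
  grind

/-- The symbols `$₁, …, $_k, %` are pairwise distinct and do not belong to `Sig`. -/
structure IsGadgetAlphabet (Sig : Set β) (dollar : Fin k → β) (percent : β) : Prop where
  injective : Function.Injective dollar
  dollar_ne_percent : ∀ i, dollar i ≠ percent
  dollar_notMem : ∀ i, dollar i ∉ Sig
  percent_notMem : percent ∉ Sig

/-- A labelling of the letters of `T` by the segments of an alignment gadget `AG_i(X)` containing
`T`, reduced to the properties that the upper bound on `T.length` depends on. Segments are named as
in `gadgetSegments`. -/
structure IsGadgetLabelling (Sig : Set β) (dollar : Fin k → β) (percent : β) (ℓ : ℕ) (i : Fin k)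
    (X : Fin n → List β) (T : List β) (τ : Fin T.length → ℕ) : Prop where
  monotone : Monotone τ
  get_cases : ∀ p, T.get p ∈ Sig ∨ T.get p = percent ∨ ∃ j, T.get p = dollar j
  get_mem_iff : ∀ p, T.get p ∈ Sig ↔ ∃ a : Fin n, τ p = 3 * a + 2
  get_eq_percent_iff : ∀ p, T.get p = percent ↔ ∃ a : Fin n, τ p = 3 * a + 3
  exists_eq_of_get_eq_dollar : ∀ p, T.get p = dollar i → ∃ a : Fin n, τ p = 3 * a + 1
  card_dollar_le : ∀ (a : Fin n) (j : Fin k) (P : Finset (Fin T.length)),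
    (∀ p ∈ P, T.get p = dollar j ∧ τ p = 3 * a + 1) → #P ≤ 2 * ℓ
  card_percent_le : ∀ a : Fin n, #{p | τ p = 3 * a + 3} ≤ 2 * ℓ
  subword_sublist : ∀ a : Fin n, subword T {p | τ p = 3 * a + 2} <+ X a

theorem IsLabelling.isGadgetLabelling {τ : Fin T.length → ℕ}
    (hτ : IsLabelling (gadgetSegments ℓ dollar percent i f X) T τ)
    (hSig : IsGadgetAlphabet Sig dollar percent) (hX : ∀ a, ∀ c ∈ X a, c ∈ Sig) :
    IsGadgetLabelling Sig dollar percent ℓ i X T τ := by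
  have hcases (p) : (τ p = 0 ∨ τ p = 3 * n + 1) ∧ (∃ j, j ≠ i ∧ T.get p = dollar j) ∨
      ∃ a : Fin n, (τ p = 3 * a + 1 ∧ ∃ j, T.get p = dollar j) ∨
        (τ p = 3 * a + 2 ∧ T.get p ∈ Sig) ∨ (τ p = 3 * a + 3 ∧ T.get p = percent) := by
    obtain ⟨s, hs, hsp, hp⟩ := hτ.exists_mem p
    rw [← hsp]
    rcases mem_gadgetSegments.1 hs with ⟨hs, hs'⟩ | ⟨a, rfl | rfl | rfl⟩
    · exact .inl ⟨hs, exists_eq_dollar_of_mem_strPow_gadgetAminus (hs' ▸ hp)⟩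
    · exact .inr ⟨a, .inl ⟨rfl, exists_eq_dollar_of_mem_gadgetA hp⟩⟩
    · exact .inr ⟨a, .inr (.inl ⟨rfl, hX a _ hp⟩)⟩
    · exact .inr ⟨a, .inr (.inr ⟨rfl, List.eq_of_mem_replicate hp⟩)⟩
  obtain ⟨hinj, hdp, hdS, hpS⟩ := hSig
  refine ⟨hτ.monotone, fun p => ?_, fun p => ?_, fun p => ?_, fun p => ?_, fun a j P hP => ?_,
    fun a => ?_, fun a => ?_⟩
  · grind
  · grind
  · grind
  · grind
  · classical
    have hsub := (subword_sublist_subword fun p hp => by simpa using (hP p hp).2).trans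
      (hτ.subword_sublist (3 * a + 1, gadgetA k ℓ dollar)
        (mem_gadgetSegments.2 (.inr ⟨a, by simp⟩)))
    rw [subword_eq_replicate fun p hp => (hP p hp).1, List.replicate_sublist_iff] at hsub
    exact hsub.trans_eq (count_gadgetA hinj j)
  · rw [← length_subword]
    exact (hτ.subword_sublist (3 * a + 3, List.replicate (2 * ℓ) percent)
      (mem_gadgetSegments.2 (.inr ⟨a, by simp⟩))).length_le.trans_eq List.length_replicate
  · exact hτ.subword_sublist (3 * a + 2, X a) (mem_gadgetSegments.2 (.inr ⟨a, by simp⟩))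

theorem exists_isGadgetLabelling (hSig : IsGadgetAlphabet Sig dollar percent)
    (hX : ∀ a, ∀ c ∈ X a, c ∈ Sig) (hT : T <+ gadgetAG k ℓ dollar percent i f X) :
    ∃ τ, IsGadgetLabelling Sig dollar percent ℓ i X T τ := by
  obtain ⟨τ, hτ⟩ :=
    exists_isLabelling pairwise_gadgetSegments (flatten_map_snd_gadgetSegments ▸ hT)
  exact ⟨τ, hτ.isGadgetLabelling hSig hX⟩

theorem mem_gadgetAG {c : β} (hc : c ∈ gadgetAG k ℓ dollar percent i f X) :
    (∃ j, c = dollar j) ∨ (∃ a, c ∈ X a) ∨ c = percent := by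
  rw [← flatten_map_snd_gadgetSegments, List.mem_flatten] at hc
  obtain ⟨w, hw, hc⟩ := hc
  obtain ⟨s, hs, rfl⟩ := List.mem_map.1 hw
  rcases mem_gadgetSegments.1 hs with ⟨-, hs⟩ | ⟨a, rfl | rfl | rfl⟩
  · obtain ⟨j, -, hj⟩ := exists_eq_dollar_of_mem_strPow_gadgetAminus (hs ▸ hc)
    exact .inl ⟨j, hj⟩
  · exact .inl (exists_eq_dollar_of_mem_gadgetA hc)
  · exact .inr (.inl ⟨a, hc⟩)
  · exact .inr (.inr (List.eq_of_mem_replicate hc))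

end GadgetLabelling

theorem eq_of_card_mul_le_sum {ι : Type*} [Fintype ι] {g : ι → ℕ} {b : ℕ} (hg : ∀ x, g x ≤ b)
    (hb : Fintype.card ι * b ≤ ∑ x, g x) (x : ι) : g x = b := by
  have hsum : ∑ x, g x = ∑ _x : ι, b :=
    (Finset.sum_le_sum fun x _ => hg x).antisymm (by simpa using hb)
  exact (Finset.sum_eq_sum_iff_of_le fun x _ => hg x).1 hsum x (Finset.mem_univ x)

theorem exists_offset_of_forall_step {m n : ℕ} {a : Fin m → Fin n}
    (ha : ∀ j j' : Fin m, (j' : ℕ) = j + 1 → (a j' : ℕ) = a j + 1) :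
    ∃ Δ, Δ + m ≤ n ∧ ∀ j, (a j : ℕ) = Δ + j := by
  cases m with
  | zero => exact ⟨0, by omega, fun j => j.elim0⟩
  | succ m =>
    have haj : ∀ j, (a j : ℕ) = a 0 + j := by
      intro j
      induction j using Fin.induction with
      | zero => simp
      | succ j ih => rw [ha j.castSucc j.succ (by simp), ih, Fin.val_succ, Fin.val_castSucc]; rfl
    have hlast := haj (Fin.last m)
    rw [Fin.val_last] at hlast
    exact ⟨a 0, by omega, haj⟩

section CommonLabelling

variable {β : Type*} {K ℓ m n z : ℕ} {dollar : Fin (K + 1) → β} {percent : β} {Sig : Set β}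
  {X : Fin K → Fin n → List β} {Y : Fin m → List β} {T : List β}
  {τ : Fin K → Fin T.length → ℕ} {σ : Fin T.length → ℕ}

/-- Labellings of the letters of a common subsequence `T` of the alignment gadgets: `τ i` refers to
the segments of `AG_i(X i)` and `σ` to those of `AG_y(Y)`. -/
structure IsCommonLabelling (Sig : Set β) (dollar : Fin (K + 1) → β) (percent : β) (ℓ : ℕ)
    (X : Fin K → Fin n → List β) (Y : Fin m → List β) (T : List β)
    (τ : Fin K → Fin T.length → ℕ) (σ : Fin T.length → ℕ) : Prop where
  alphabet : IsGadgetAlphabet Sig dollar percent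
  left : ∀ i, IsGadgetLabelling Sig dollar percent ℓ i.castSucc (X i) T (τ i)
  right : IsGadgetLabelling Sig dollar percent ℓ (Fin.last K) Y T σ

/-- The indices `j` for which `Y[j]` is matched to more than one string of some list `X i`. -/
def splitIndices (m : ℕ) (τ : Fin K → Fin T.length → ℕ) (σ : Fin T.length → ℕ) : Finset (Fin m) :=
  {j | ∃ i p q, σ p = 3 * j + 2 ∧ σ q = 3 * j + 2 ∧ τ i p < τ i q}

/-- The pairs `(i, a)` such that the copy of `A` preceding `X i a` in `AG_i(X i)` is unmatched. -/
def skippedBlocks (n : ℕ) (τ : Fin K → Fin T.length → ℕ) : Finset (Fin K × Fin n) :=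
  {x | ∀ p, τ x.1 p ≠ 3 * x.2 + 1}

/-- The positions of the letter `c` in `T` that the labelling `τ` places in the copy of `A`
preceding the `a`-th tuple. -/
def blockPositions [DecidableEq β] (T : List β) (τ : Fin T.length → ℕ) (c : β) (a : ℕ) :
    Finset (Fin T.length) :=
  {p | T.get p = c ∧ τ p = 3 * a + 1}

theorem mem_blockPositions [DecidableEq β] {τ : Fin T.length → ℕ} {c : β} {a : ℕ}
    {p : Fin T.length} : p ∈ blockPositions T τ c a ↔ T.get p = c ∧ τ p = 3 * a + 1 := by
  simp [blockPositions]

theorem IsGadgetLabelling.card_blockPositions_le [DecidableEq β] {k : ℕ} {dollar : Fin k → β}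
    {i : Fin k} {X : Fin n → List β} {τ : Fin T.length → ℕ}
    (h : IsGadgetLabelling Sig dollar percent ℓ i X T τ) (a : Fin n) (j : Fin k) :
    #(blockPositions T τ (dollar j) a) ≤ 2 * ℓ :=
  h.card_dollar_le a j _ fun _ => mem_blockPositions.1

namespace IsCommonLabelling

theorem exists_label_left (h : IsCommonLabelling Sig dollar percent ℓ X Y T τ σ) {p : Fin T.length}
    {j : Fin m} (hp : σ p = 3 * j + 2) (i : Fin K) : ∃ a : Fin n, τ i p = 3 * a + 2 :=
  ((h.left i).get_mem_iff p).1 ((h.right.get_mem_iff p).2 ⟨j, hp⟩)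

theorem subword_sublist_left (h : IsCommonLabelling Sig dollar percent ℓ X Y T τ σ)
    {p : Fin T.length} {i : Fin K} {j : Fin m} {a : Fin n} (hj : j ∉ splitIndices m τ σ)
    (hp : σ p = 3 * j + 2) (ha : τ i p = 3 * a + 2) :
    subword T {q | σ q = 3 * j + 2} <+ X i a := by
  refine (subword_sublist_subword fun q hq => ?_).trans ((h.left i).subword_sublist a)
  simp only [Finset.mem_filter_univ] at hq ⊢
  simp only [splitIndices, Finset.mem_filter_univ, not_exists, not_and, not_lt] at hj
  exact ((hj i p q hp hq).antisymm (hj i q p hq hp)).trans ha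

theorem card_string_le (h : IsCommonLabelling Sig dollar percent ℓ X Y T τ σ)
    (hz : ∀ (idx : Fin K → Fin n) (j : Fin m),
      lcsLen ((List.ofFn fun i => X i (idx i)) ++ [Y j]) ≤ z + 1)
    {j : Fin m} (hj : j ∉ splitIndices m τ σ) : #{p | σ p = 3 * j + 2} ≤ z + 1 := by
  obtain hempty | ⟨p, hp⟩ := Finset.eq_empty_or_nonempty ({p | σ p = 3 * j + 2} : Finset _)
  · simp [hempty]
  · rw [Finset.mem_filter_univ] at hp
    choose idx hidx using h.exists_label_left hp
    exact (le_lcsLen_ofFn_append_singleton_iff.2 ⟨_, length_subword _,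
      fun i => h.subword_sublist_left hj hp (hidx i), h.right.subword_sublist j⟩).trans (hz idx j)

theorem card_string_le_length (h : IsCommonLabelling Sig dollar percent ℓ X Y T τ σ)
    (hY : ∀ j, (Y j).length ≤ ℓ) (j : Fin m) : #{p | σ p = 3 * j + 2} ≤ ℓ := by
  rw [← length_subword]
  exact (h.right.subword_sublist j).length_le.trans (hY j)

-- A split string `Y[j]` straddles an `A`-block of some `X i`; no letter of `T` can go there, and
-- no other split string straddles that block.
theorem card_splitIndices_le (h : IsCommonLabelling Sig dollar percent ℓ X Y T τ σ) :
    #(splitIndices m τ σ) ≤ #(skippedBlocks n τ) := by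
  have hlt {i p q} : τ i p < τ i q → p < q := (h.left i).monotone.reflect_lt
  refine Finset.card_le_card_of_forall_subsingleton (fun (j : Fin m) (x : Fin K × Fin n) =>
    ∃ p q, σ p = 3 * j + 2 ∧ σ q = 3 * j + 2 ∧ τ x.1 p < 3 * x.2 + 1 ∧ 3 * x.2 + 1 < τ x.1 q)
    (fun j hj => ?_) ?_
  · obtain ⟨i, p, q, hp, hq, hpq⟩ := (Finset.mem_filter_univ _).1 hj
    obtain ⟨a, ha⟩ := h.exists_label_left hp i
    obtain ⟨b, hb⟩ := h.exists_label_left hq i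
    have hab : (a : ℕ) + 1 < n := by have := b.isLt; omega
    refine ⟨(i, ⟨a + 1, hab⟩), (Finset.mem_filter_univ _).2 fun r hr => ?_,
      p, q, hp, hq, by dsimp only; omega, by dsimp only; omega⟩
    dsimp only at hr
    have hpr := h.right.monotone (hlt (i := i) (p := p) (q := r) (by omega)).le
    have hrq := h.right.monotone (hlt (i := i) (p := r) (q := q) (by omega)).le
    obtain ⟨c, hc⟩ := h.exists_label_left (p := r) (j := j) (by omega) i
    omega
  · rintro x - j ⟨-, p, q, hp, hq, hpx, hxq⟩ j' ⟨-, p', q', hp', hq', hpx', hxq'⟩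
    have hpq' := h.right.monotone (hlt (hpx.trans hxq')).le
    have hpq := h.right.monotone (hlt (hpx'.trans hxq)).le
    exact Fin.ext (by omega)

theorem sum_card_string_le (h : IsCommonLabelling Sig dollar percent ℓ X Y T τ σ)
    (hY : ∀ j, (Y j).length ≤ ℓ)
    (hz : ∀ (idx : Fin K → Fin n) (j : Fin m),
      lcsLen ((List.ofFn fun i => X i (idx i)) ++ [Y j]) ≤ z + 1) :
    ∑ j : Fin m, #{p | σ p = 3 * j + 2} ≤ (z + 1) * m + ℓ * #(splitIndices m τ σ) := by
  have hj (j : Fin m) :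
      #{p | σ p = 3 * j + 2} ≤ (z + 1) + if j ∈ splitIndices m τ σ then ℓ else 0 := by
    split_ifs with hj
    · exact (h.card_string_le_length hY j).trans (Nat.le_add_left _ _)
    · exact h.card_string_le hz hj
  calc ∑ j : Fin m, #{p | σ p = 3 * j + 2}
      ≤ ∑ j : Fin m, ((z + 1) + if j ∈ splitIndices m τ σ then ℓ else 0) :=
        Finset.sum_le_sum fun j _ => hj j
    _ = (z + 1) * m + ℓ * #(splitIndices m τ σ) := by
        simp [Finset.sum_add_distrib, mul_comm]

theorem sum_card_percent_le (h : IsCommonLabelling Sig dollar percent ℓ X Y T τ σ) :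
    ∑ j : Fin m, #{p | σ p = 3 * j + 3} ≤ 2 * ℓ * m := by
  simpa [mul_comm] using Finset.sum_le_sum (s := .univ) fun j _ => h.right.card_percent_le j

theorem sum_card_blockPositions_add_le [DecidableEq β]
    (h : IsCommonLabelling Sig dollar percent ℓ X Y T τ σ) :
    ∑ x : Fin K × Fin n, #(blockPositions T (τ x.1) (dollar x.1.castSucc) x.2) +
      2 * ℓ * #(skippedBlocks n τ) ≤ 2 * ℓ * (K * n) := by
  have hx (x : Fin K × Fin n) : #(blockPositions T (τ x.1) (dollar x.1.castSucc) x.2) +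
      (if x ∈ skippedBlocks n τ then 2 * ℓ else 0) ≤ 2 * ℓ := by
    split_ifs with hx
    · have hempty : blockPositions T (τ x.1) (dollar x.1.castSucc) x.2 = ∅ :=
        Finset.eq_empty_of_forall_notMem fun p hp =>
          (Finset.mem_filter_univ _).1 hx p (mem_blockPositions.1 hp).2
      simp [hempty]
    · exact (h.left x.1).card_blockPositions_le x.2 _
  calc _ = ∑ x : Fin K × Fin n, (#(blockPositions T (τ x.1) (dollar x.1.castSucc) x.2) +
        if x ∈ skippedBlocks n τ then 2 * ℓ else 0) := by
        simp [Finset.sum_add_distrib, mul_comm]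
    _ ≤ ∑ _x : Fin K × Fin n, 2 * ℓ := Finset.sum_le_sum fun x _ => hx x
    _ = 2 * ℓ * (K * n) := by simp [mul_comm]

theorem length_le_sum [DecidableEq β]
    (h : IsCommonLabelling Sig dollar percent ℓ X Y T τ σ) :
    T.length ≤ ∑ x : Fin K × Fin n, #(blockPositions T (τ x.1) (dollar x.1.castSucc) x.2) +
      ∑ j : Fin m, #(blockPositions T σ (dollar (Fin.last K)) j) +
      ∑ j : Fin m, #{p | σ p = 3 * j + 3} + ∑ j : Fin m, #{p | σ p = 3 * j + 2} := by
  have hcover : (Finset.univ : Finset (Fin T.length)) ⊆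
      ((Finset.univ.biUnion (fun x : Fin K × Fin n =>
          blockPositions T (τ x.1) (dollar x.1.castSucc) x.2) ∪
        Finset.univ.biUnion fun j : Fin m => blockPositions T σ (dollar (Fin.last K)) j) ∪
        Finset.univ.biUnion fun j : Fin m => {p | σ p = 3 * j + 3}) ∪
        Finset.univ.biUnion fun j : Fin m => {p | σ p = 3 * j + 2} := by
    intro p _
    simp only [Finset.mem_union, Finset.mem_biUnion, Finset.mem_univ, true_and,
      Finset.mem_filter_univ, mem_blockPositions]
    rcases h.right.get_cases p with hp | hp | ⟨c, hp⟩
    · exact .inr ((h.right.get_mem_iff p).1 hp)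
    · exact .inl (.inr ((h.right.get_eq_percent_iff p).1 hp))
    · induction c using Fin.lastCases with
      | last =>
        obtain ⟨j, hj⟩ := h.right.exists_eq_of_get_eq_dollar p hp
        exact .inl (.inl (.inr ⟨j, hp, hj⟩))
      | cast i =>
        obtain ⟨a, ha⟩ := (h.left i).exists_eq_of_get_eq_dollar p hp
        exact .inl (.inl (.inl ⟨(i, a), hp, ha⟩))
  have hcard := Finset.card_le_card hcover
  rw [Finset.card_univ, Fintype.card_fin] at hcard
  refine hcard.trans <| (Finset.card_union_le _ _).trans <| add_le_add
    ((Finset.card_union_le _ _).trans <| add_le_add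
      ((Finset.card_union_le _ _).trans <| add_le_add ?_ ?_) ?_) ?_ <;>
  exact Finset.card_biUnion_le

theorem sum_card_blockPositions_right_le [DecidableEq β]
    (h : IsCommonLabelling Sig dollar percent ℓ X Y T τ σ) :
    ∑ j : Fin m, #(blockPositions T σ (dollar (Fin.last K)) j) ≤ 2 * ℓ * m := by
  simpa [mul_comm] using Finset.sum_le_sum (s := .univ) fun j _ =>
    h.right.card_blockPositions_le j (Fin.last K)

theorem length_add_le (h : IsCommonLabelling Sig dollar percent ℓ X Y T τ σ)
    (hY : ∀ j, (Y j).length ≤ ℓ)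
    (hz : ∀ (idx : Fin K → Fin n) (j : Fin m),
      lcsLen ((List.ofFn fun i => X i (idx i)) ++ [Y j]) ≤ z + 1) :
    T.length + ℓ * #(splitIndices m τ σ) ≤ 2 * ℓ * (2 * m + K * n) + (z + 1) * m := by
  classical
  have := Nat.mul_le_mul_left ℓ h.card_splitIndices_le
  linarith [h.length_le_sum, h.sum_card_blockPositions_add_le, h.sum_card_blockPositions_right_le,
    h.sum_card_percent_le, h.sum_card_string_le hY hz]

theorem splitIndices_eq_empty (h : IsCommonLabelling Sig dollar percent ℓ X Y T τ σ)
    (hY : ∀ j, (Y j).length ≤ ℓ)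
    (hz : ∀ (idx : Fin K → Fin n) (j : Fin m),
      lcsLen ((List.ofFn fun i => X i (idx i)) ++ [Y j]) ≤ z + 1)
    (hT : 2 * ℓ * (2 * m + K * n) + (z + 1) * m ≤ T.length) : splitIndices m τ σ = ∅ := by
  have hsplit : ℓ * #(splitIndices m τ σ) = 0 :=
    Nat.eq_zero_of_le_zero (by linarith [h.length_add_le hY hz])
  refine Finset.eq_empty_of_forall_notMem fun j hj => ?_
  obtain ⟨i, p, -, hp, -⟩ := (Finset.mem_filter_univ _).1 hj
  have hℓ : 0 < ℓ := (Finset.card_pos.2 ⟨p, (Finset.mem_filter_univ _).2 hp⟩).trans_le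
    (h.card_string_le_length hY j)
  exact (Nat.mul_pos hℓ (Finset.card_pos.2 ⟨j, hj⟩)).ne' hsplit

theorem card_eq_of_le_length [DecidableEq β]
    (h : IsCommonLabelling Sig dollar percent ℓ X Y T τ σ)
    (hY : ∀ j, (Y j).length ≤ ℓ)
    (hz : ∀ (idx : Fin K → Fin n) (j : Fin m),
      lcsLen ((List.ofFn fun i => X i (idx i)) ++ [Y j]) ≤ z + 1)
    (hT : 2 * ℓ * (2 * m + K * n) + (z + 1) * m ≤ T.length) :
    (∀ x : Fin K × Fin n, #(blockPositions T (τ x.1) (dollar x.1.castSucc) x.2) = 2 * ℓ) ∧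
      (∀ j : Fin m, #{p | σ p = 3 * j + 3} = 2 * ℓ) ∧
      ∀ j : Fin m, #{p | σ p = 3 * j + 2} = z + 1 := by
  have hsplit := h.splitIndices_eq_empty hY hz hT
  have hlen := h.length_le_sum
  have hblock := (Nat.le_add_right _ _).trans h.sum_card_blockPositions_add_le
  have hblock' := h.sum_card_blockPositions_right_le
  have hpercent := h.sum_card_percent_le
  have hstring := h.sum_card_string_le hY hz
  rw [hsplit, Finset.card_empty, mul_zero, add_zero] at hstring
  refine ⟨eq_of_card_mul_le_sum (fun x => (h.left x.1).card_blockPositions_le x.2 _) ?_,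
    eq_of_card_mul_le_sum h.right.card_percent_le ?_,
    eq_of_card_mul_le_sum (fun j => h.card_string_le hz (by simp [hsplit])) ?_⟩
  · rw [Fintype.card_prod, Fintype.card_fin, Fintype.card_fin]
    linarith
  · rw [Fintype.card_fin]
    linarith
  · rw [Fintype.card_fin]
    linarith

theorem label_left_lt (h : IsCommonLabelling Sig dollar percent ℓ X Y T τ σ)
    {p q r : Fin T.length} {i : Fin K} {j : Fin m} {a b : Fin n} (hpr : p ≤ r) (hrq : r ≤ q)
    (hr : σ r = 3 * j + 3) (ha : τ i p = 3 * a + 2) (hb : τ i q = 3 * b + 2) : a < b := by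
  obtain ⟨c, hc⟩ := ((h.left i).get_eq_percent_iff r).1 ((h.right.get_eq_percent_iff r).2 ⟨j, hr⟩)
  have hac := (h.left i).monotone hpr
  have hcb := (h.left i).monotone hrq
  exact Fin.lt_def.2 (by omega)

-- Otherwise two full blocks of `$ᵢ` from `AG_i(X i)` lie in a single copy of `A` in `AG_y(Y)`.
theorem label_left_le_add_one [DecidableEq β]
    (h : IsCommonLabelling Sig dollar percent ℓ X Y T τ σ) (hℓ : ℓ ≠ 0)
    {i : Fin K} (hblock : ∀ a : Fin n, #(blockPositions T (τ i) (dollar i.castSucc) a) = 2 * ℓ)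
    {p q : Fin T.length} {j j' : Fin m} {a b : Fin n} (hj : (j' : ℕ) = j + 1)
    (hp : σ p = 3 * j + 2) (hq : σ q = 3 * j' + 2)
    (ha : τ i p = 3 * a + 2) (hb : τ i q = 3 * b + 2) : (b : ℕ) ≤ a + 1 := by
  by_contra! hab
  have hn : (a : ℕ) + 2 < n := by have := b.isLt; omega
  have hmem : ∀ c : Fin n, a < c → c ≤ b → ∀ r ∈ blockPositions T (τ i) (dollar i.castSucc) c,
      r ∈ blockPositions T σ (dollar i.castSucc) j' := by
    intro c hac hcb r hr
    rw [mem_blockPositions] at hr ⊢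
    have hpr := h.right.monotone ((h.left i).monotone.reflect_lt (a := p) (b := r) (by omega)).le
    have hrq := h.right.monotone ((h.left i).monotone.reflect_lt (a := r) (b := q) (by omega)).le
    have hstring (t : Fin m) : σ r ≠ 3 * t + 2 := fun ht =>
      h.alphabet.dollar_notMem _ (hr.1 ▸ (h.right.get_mem_iff r).2 ⟨t, ht⟩)
    have hpercent : σ r ≠ 3 * j + 3 := fun ht =>
      h.alphabet.dollar_ne_percent _ (hr.1 ▸ (h.right.get_eq_percent_iff r).2 ⟨j, ht⟩)
    have := hstring j
    have := hstring j'
    exact ⟨hr.1, by omega⟩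
  have hdisj : Disjoint (blockPositions T (τ i) (dollar i.castSucc) (a + 1))
      (blockPositions T (τ i) (dollar i.castSucc) (a + 2)) := by
    refine Finset.disjoint_left.2 fun r hr hr' => ?_
    rw [mem_blockPositions] at hr hr'
    omega
  have hcard := (Finset.card_le_card (Finset.union_subset
    (hmem ⟨a + 1, by omega⟩ (Fin.lt_def.2 (by simp)) (Fin.le_def.2 (by dsimp only; omega)))
    (hmem ⟨a + 2, hn⟩ (Fin.lt_def.2 (by simp)) (Fin.le_def.2 (by dsimp only; omega))))).trans
    (h.right.card_blockPositions_le j' _)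
  rw [Finset.card_union_of_disjoint hdisj, hblock ⟨a + 1, by omega⟩, hblock ⟨a + 2, hn⟩] at hcard
  omega

theorem exists_offsets (h : IsCommonLabelling Sig dollar percent ℓ X Y T τ σ)
    (hY : ∀ j, (Y j).length ≤ ℓ)
    (hz : ∀ (idx : Fin K → Fin n) (j : Fin m),
      lcsLen ((List.ofFn fun i => X i (idx i)) ++ [Y j]) ≤ z + 1)
    (hT : 2 * ℓ * (2 * m + K * n) + (z + 1) * m ≤ T.length) :
    ∃ (Δ : Fin K → ℕ) (a : Fin K → Fin m → Fin n), (∀ i, Δ i + m ≤ n) ∧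
      (∀ i j, (a i j : ℕ) = Δ i + j) ∧
      ∀ j, z + 1 ≤ lcsLen ((List.ofFn fun i => X i (a i j)) ++ [Y j]) := by
  classical
  obtain ⟨hblock, hpercent, hstring⟩ := h.card_eq_of_le_length hY hz hT
  have hℓ (j : Fin m) : ℓ ≠ 0 := by
    have := h.card_string_le_length hY j
    rw [hstring] at this
    omega
  have hp (j : Fin m) : ∃ p, σ p = 3 * j + 2 := by
    obtain ⟨p, hp⟩ := Finset.card_pos.1 ((Nat.succ_pos z).trans_eq (hstring j).symm)
    exact ⟨p, (Finset.mem_filter.1 hp).2⟩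
  have hr (j : Fin m) : ∃ r, σ r = 3 * j + 3 := by
    obtain ⟨r, hr⟩ := Finset.card_pos.1
      ((Nat.mul_pos two_pos (hℓ j).bot_lt).trans_eq (hpercent j).symm)
    exact ⟨r, (Finset.mem_filter.1 hr).2⟩
  choose p hp using hp
  choose a ha using fun i j => h.exists_label_left (hp j) i
  have hstep (i : Fin K) (j j' : Fin m) (hj : (j' : ℕ) = j + 1) : (a i j' : ℕ) = a i j + 1 := by
    obtain ⟨r, hr⟩ := hr j
    have hpr : p j < r := h.right.monotone.reflect_lt (by rw [hp, hr]; omega)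
    have hrp : r < p j' := h.right.monotone.reflect_lt (by rw [hp, hr]; omega)
    have hlt := h.label_left_lt hpr.le hrp.le hr (ha i j) (ha i j')
    have hle := h.label_left_le_add_one (hℓ j) (fun c => hblock (i, c)) hj (hp j) (hp j')
      (ha i j) (ha i j')
    omega
  choose Δ hΔ hoffset using fun i => exists_offset_of_forall_step (hstep i)
  refine ⟨Δ, a, hΔ, hoffset, fun j => le_lcsLen_ofFn_append_singleton_iff.2
    ⟨_, (length_subword _).trans (hstring j), fun i => ?_, h.right.subword_sublist j⟩⟩
  exact h.subword_sublist_left (by simp [h.splitIndices_eq_empty hY hz hT]) (hp j) (ha i j)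

end IsCommonLabelling

theorem exists_isCommonLabelling {f : ℕ} (hSig : IsGadgetAlphabet Sig dollar percent)
    (hX : ∀ i a, ∀ c ∈ X i a, c ∈ Sig) (hY : ∀ j, ∀ c ∈ Y j, c ∈ Sig)
    (hTX : ∀ i, T <+ gadgetAG (K + 1) ℓ dollar percent i.castSucc f (X i))
    (hTY : T <+ gadgetAG (K + 1) ℓ dollar percent (Fin.last K) f Y) :
    ∃ τ σ, IsCommonLabelling Sig dollar percent ℓ X Y T τ σ := by
  choose τ hτ using fun i => exists_isGadgetLabelling hSig (hX i) (hTX i)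
  obtain ⟨σ, hσ⟩ := exists_isGadgetLabelling hSig hY hTY
  exact ⟨τ, σ, hSig, hτ, hσ⟩

end CommonLabelling

section AlignmentWitness

variable {β : Type*} {k ℓ : ℕ} {percent : β}

theorem flatten_ofFn_dollarBlocks_sublist {f : ℕ} {dollar : Fin k → β} {i : Fin k}
    {S : Fin f → Finset (Fin k)} (hS : ∀ t, i ∉ S t) :
    (List.ofFn fun t => dollarBlocks ℓ dollar (S t)).flatten <+
      strPow (gadgetAminus k ℓ dollar i) f := by
  rw [strPow_eq_flatten_ofFn]
  exact flatten_ofFn_sublist_flatten_ofFn fun t => dollarBlocks_sublist_gadgetAminus (hS t)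

-- The paddings of `AG_i(X)` have to accommodate only those chunks that lack `$ᵢ`; each of the other
-- chunks is placed in the copy of `A` of one of the unaligned tuples.
theorem append_sublist_gadgetAG {d m r : ℕ} {dollar : Fin k → β} {i : Fin k}
    {S S' : Fin (r + d) → Finset (Fin k)} {X : Fin (d + m + r) → List β} {U : Fin m → List β}
    (hS : ∀ t, i ∉ S (Fin.castAdd d t)) (hS' : ∀ t, i ∉ S' (Fin.natAdd r t))
    (hU : ∀ j, U j <+ X (Fin.castAdd r (Fin.natAdd d j))) :
    (List.ofFn fun t => dollarBlocks ℓ dollar (S t)).flatten ++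
        (List.ofFn fun j => gadgetA k ℓ dollar ++ U j ++ List.replicate (2 * ℓ) percent).flatten ++
        (List.ofFn fun t => dollarBlocks ℓ dollar (S' t)).flatten <+
      gadgetAG k ℓ dollar percent i (r + d) X := by
  have htuples {f : ℕ} (S : Fin f → Finset (Fin k)) (X : Fin f → List β) :
      (List.ofFn fun t => dollarBlocks ℓ dollar (S t)).flatten <+ (List.ofFn fun t =>
        gadgetA k ℓ dollar ++ X t ++ List.replicate (2 * ℓ) percent).flatten :=
    flatten_ofFn_sublist_flatten_ofFn fun t => dollarBlocks_sublist_gadgetA.trans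
      (List.append_assoc _ _ _ ▸ List.sublist_append_left _ _)
  have halign : (List.ofFn fun j =>
        gadgetA k ℓ dollar ++ U j ++ List.replicate (2 * ℓ) percent).flatten <+
      (List.ofFn fun j => gadgetA k ℓ dollar ++ X (Fin.castAdd r (Fin.natAdd d j)) ++
        List.replicate (2 * ℓ) percent).flatten :=
    flatten_ofFn_sublist_flatten_ofFn fun j => ((hU j).append_left _).append_right _
  have hleft := (flatten_ofFn_dollarBlocks_sublist (ℓ := ℓ) (dollar := dollar) hS).trans
    (strPow_sublist_strPow _ (Nat.le_add_right r d))
  have hright := (flatten_ofFn_dollarBlocks_sublist (ℓ := ℓ) (dollar := dollar) hS').trans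
    (strPow_sublist_strPow _ (Nat.le_add_left d r))
  have htuplesLeft := htuples (fun t => S (Fin.natAdd r t))
    fun t => X (Fin.castAdd r (Fin.castAdd m t))
  have htuplesRight := htuples (fun t => S' (Fin.castAdd d t)) fun t => X (Fin.natAdd (d + m) t)
  have hsub := hleft.append (htuplesLeft.append (halign.append (htuplesRight.append hright)))
  simp only [gadgetAG, List.ofFn_add, List.flatten_append, List.append_assoc] at hsub ⊢
  exact hsub

variable {K m f : ℕ} {dollar : Fin (K + 1) → β} {Δ : Fin K → ℕ} {U : Fin m → List β}

/-- The common subsequence of the alignment gadgets that matches the tuples aligned by the offsets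
`Δ`, surrounded by `f` chunks of `$`-blocks on either side: `$ᵢ^{2ℓ}` belongs to the last `Δ i`
chunks on the left, and to the first `f - Δ i` chunks on the right. -/
def alignmentWitness (ℓ : ℕ) (dollar : Fin (K + 1) → β) (percent : β) (f : ℕ) (Δ : Fin K → ℕ)
    (U : Fin m → List β) : List β :=
  (List.ofFn fun t : Fin f => dollarBlocks ℓ dollar
    (Finset.map Fin.castSuccEmb {i | f ≤ t + Δ i})).flatten ++
  (List.ofFn fun j => gadgetA (K + 1) ℓ dollar ++ U j ++ List.replicate (2 * ℓ) percent).flatten ++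
  (List.ofFn fun t : Fin f => dollarBlocks ℓ dollar
    (Finset.map Fin.castSuccEmb {i | t + Δ i < f})).flatten

theorem length_alignmentWitness {z : ℕ} (hU : ∀ j, (U j).length = z) :
    (alignmentWitness ℓ dollar percent f Δ U).length =
      2 * ℓ * (2 * m + K * (m + f)) + z * m := by
  have hchunks (t : Fin f) : #{i | f ≤ t + Δ i} + #{i | t + Δ i < f} = K := by
    simpa using Finset.card_filter_add_card_filter_not (s := (Finset.univ : Finset (Fin K)))
      (fun i => f ≤ t + Δ i)
  calc _ = 2 * ℓ * ∑ t : Fin f, (#{i | f ≤ t + Δ i} + #{i | t + Δ i < f}) +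
        m * (2 * ℓ * (K + 1) + z + 2 * ℓ) := by
        simp only [alignmentWitness, List.append_assoc, List.length_append, List.length_flatten,
          List.map_ofFn, Function.comp_def, length_dollarBlocks, Finset.card_map, List.sum_ofFn,
          length_gadgetA, hU, List.length_replicate, List.ofFn_const, List.sum_replicate,
          smul_eq_mul, Finset.sum_add_distrib]
        rw [← Finset.mul_sum, ← Finset.mul_sum]
        ring
    _ = _ := by
        simp only [hchunks, Finset.sum_const, Finset.card_univ, Fintype.card_fin, smul_eq_mul]
        ring

theorem alignmentWitness_sublist_gadgetAG_last {Y : Fin m → List β} (hU : ∀ j, U j <+ Y j) :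
    alignmentWitness ℓ dollar percent f Δ U <+
      gadgetAG (K + 1) ℓ dollar percent (Fin.last K) f Y := by
  refine ((flatten_ofFn_dollarBlocks_sublist (by simp)).append
    (flatten_ofFn_sublist_flatten_ofFn fun j => ?_)).append
    (flatten_ofFn_dollarBlocks_sublist (by simp))
  exact ((hU j).append_left _).append_right _

theorem alignmentWitness_sublist_gadgetAG_castSucc {n : ℕ} (hn : n = m + f) {i : Fin K}
    (hΔ : Δ i ≤ f) {X : Fin n → List β} {a : Fin m → Fin n} (ha : ∀ j, (a j : ℕ) = Δ i + j)
    (hU : ∀ j, U j <+ X (a j)) :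
    alignmentWitness ℓ dollar percent f Δ U <+
      gadgetAG (K + 1) ℓ dollar percent i.castSucc f X := by
  obtain ⟨r, rfl⟩ := Nat.exists_eq_add_of_le' hΔ
  obtain rfl : n = Δ i + m + r := by omega
  refine append_sublist_gadgetAG (fun t => ?_) (fun t => ?_) fun j => ?_
  · simp
  · simp
  · have haj : a j = Fin.castAdd r (Fin.natAdd (Δ i) j) := Fin.ext (ha j)
    exact haj ▸ hU j

end AlignmentWitness

section AlignmentGadget

variable {β : Type*} {K ℓ m n f z : ℕ} {dollar : Fin (K + 1) → β} {percent : β} {Sig : Set β}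
  {X : Fin K → Fin n → List β} {Y : Fin m → List β}

theorem lcsLen_gadgetAG_le (hSig : IsGadgetAlphabet Sig dollar percent)
    (hX : ∀ i a, ∀ c ∈ X i a, c ∈ Sig) (hY : ∀ j, ∀ c ∈ Y j, c ∈ Sig)
    (hYlen : ∀ j, (Y j).length ≤ ℓ)
    (hz : ∀ (idx : Fin K → Fin n) (j : Fin m),
      lcsLen ((List.ofFn fun i => X i (idx i)) ++ [Y j]) ≤ z + 1) :
    lcsLen ((List.ofFn fun i => gadgetAG (K + 1) ℓ dollar percent i.castSucc f (X i)) ++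
      [gadgetAG (K + 1) ℓ dollar percent (Fin.last K) f Y]) ≤
        2 * ℓ * (2 * m + K * n) + (z + 1) * m := by
  obtain ⟨T, hT, hTX, hTY⟩ := le_lcsLen_ofFn_append_singleton_iff.1 (le_refl (lcsLen
    ((List.ofFn fun i => gadgetAG (K + 1) ℓ dollar percent i.castSucc f (X i)) ++
      [gadgetAG (K + 1) ℓ dollar percent (Fin.last K) f Y])))
  obtain ⟨τ, σ, h⟩ := exists_isCommonLabelling hSig hX hY hTX hTY
  exact hT ▸ (Nat.le_add_right _ _).trans (h.length_add_le hYlen hz)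

theorem exists_offsets_of_le_lcsLen_gadgetAG (hSig : IsGadgetAlphabet Sig dollar percent)
    (hX : ∀ i a, ∀ c ∈ X i a, c ∈ Sig) (hY : ∀ j, ∀ c ∈ Y j, c ∈ Sig)
    (hYlen : ∀ j, (Y j).length ≤ ℓ)
    (hz : ∀ (idx : Fin K → Fin n) (j : Fin m),
      lcsLen ((List.ofFn fun i => X i (idx i)) ++ [Y j]) ≤ z + 1)
    (hD : 2 * ℓ * (2 * m + K * n) + (z + 1) * m ≤
      lcsLen ((List.ofFn fun i => gadgetAG (K + 1) ℓ dollar percent i.castSucc f (X i)) ++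
        [gadgetAG (K + 1) ℓ dollar percent (Fin.last K) f Y])) :
    ∃ (Δ : Fin K → ℕ) (a : Fin K → Fin m → Fin n), (∀ i, Δ i + m ≤ n) ∧
      (∀ i j, (a i j : ℕ) = Δ i + j) ∧
      ∀ j, z + 1 ≤ lcsLen ((List.ofFn fun i => X i (a i j)) ++ [Y j]) := by
  obtain ⟨T, hT, hTX, hTY⟩ := le_lcsLen_ofFn_append_singleton_iff.1 hD
  obtain ⟨τ, σ, h⟩ := exists_isCommonLabelling hSig hX hY hTX hTY
  exact h.exists_offsets hYlen hz hT.ge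

theorem le_lcsLen_gadgetAG (hn : n = m + f) {Δ : Fin K → ℕ} (hΔ : ∀ i, Δ i ≤ f)
    {a : Fin K → Fin m → Fin n} (ha : ∀ i j, (a i j : ℕ) = Δ i + j)
    (hz : ∀ j, z ≤ lcsLen ((List.ofFn fun i => X i (a i j)) ++ [Y j])) :
    2 * ℓ * (2 * m + K * n) + z * m ≤
      lcsLen ((List.ofFn fun i => gadgetAG (K + 1) ℓ dollar percent i.castSucc f (X i)) ++
        [gadgetAG (K + 1) ℓ dollar percent (Fin.last K) f Y]) := by
  choose U hU hUX hUY using fun j => le_lcsLen_ofFn_append_singleton_iff.1 (hz j)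
  exact le_lcsLen_ofFn_append_singleton_iff.2
    ⟨alignmentWitness ℓ dollar percent f Δ U, hn ▸ length_alignmentWitness hU,
      fun i => alignmentWitness_sublist_gadgetAG_castSucc hn (hΔ i) (ha i) fun j => hUX j i,
      alignmentWitness_sublist_gadgetAG_last hUY⟩

theorem lcsLen_gadgetSAG (hK : K ≠ 0) {atSym : β} {D : ℕ} (hda : ∀ i, dollar i ≠ atSym)
    (hpa : percent ≠ atSym) (haX : ∀ i a, atSym ∉ X i a) (haY : ∀ j, atSym ∉ Y j) :
    lcsLen ((List.ofFn fun i =>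
        gadgetSAGx (K + 1) ℓ dollar percent atSym D i.castSucc f (X i)) ++
      [gadgetSAGy (K + 1) ℓ dollar percent atSym D (Fin.last K) f Y]) =
    max (D - 1) (lcsLen
      ((List.ofFn fun i => gadgetAG (K + 1) ℓ dollar percent i.castSucc f (X i)) ++
        [gadgetAG (K + 1) ℓ dollar percent (Fin.last K) f Y])) := by
  have hnotMem {i : Fin (K + 1)} {N : ℕ} {Z : Fin N → List β} (hZ : ∀ a, atSym ∉ Z a) :
      atSym ∉ gadgetAG (K + 1) ℓ dollar percent i f Z := by
    intro hmem
    rcases mem_gadgetAG hmem with ⟨j, hj⟩ | ⟨a, ha⟩ | hp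
    · exact hda j hj.symm
    · exact hZ a ha
    · exact hpa hp.symm
  exact lcsLen_replicate_append hK (fun i => hnotMem (haX i)) (hnotMem haY)

theorem perfect_alignment_gadget_general (hK : K ≠ 0) (hmn : m ≤ n)
    (hSig : IsGadgetAlphabet Sig dollar percent)
    (hX : ∀ i a, ∀ c ∈ X i a, c ∈ Sig) (hY : ∀ j, ∀ c ∈ Y j, c ∈ Sig)
    (hYlen : ∀ j, (Y j).length ≤ ℓ)
    {atSym : β} (hda : ∀ i, dollar i ≠ atSym) (hpa : percent ≠ atSym) (haS : atSym ∉ Sig)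
    (hz : ∀ (idx : Fin K → Fin n) (j : Fin m),
      lcsLen ((List.ofFn fun i => X i (idx i)) ++ [Y j]) ≤ z + 1)
    {D : ℕ} (hD : D = 2 * ℓ * (2 * m + K * n) + (z + 1) * m) :
    ((∃ Δ : Fin K → ℕ, ∃ hΔ : ∀ i, Δ i ≤ n - m, ∀ j : Fin m,
        lcsLen ((List.ofFn fun i =>
          X i ⟨Δ i + j, by have := hΔ i; have := j.isLt; omega⟩) ++ [Y j]) = z + 1) →
      lcsLen ((List.ofFn fun i =>
          gadgetSAGx (K + 1) ℓ dollar percent atSym D i.castSucc (n - m) (X i)) ++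
        [gadgetSAGy (K + 1) ℓ dollar percent atSym D (Fin.last K) (n - m) Y]) = D) ∧
    ((∀ (Δ : Fin K → ℕ) (hΔ : ∀ i, Δ i ≤ n - m), ∃ j : Fin m,
        lcsLen ((List.ofFn fun i =>
          X i ⟨Δ i + j, by have := hΔ i; have := j.isLt; omega⟩) ++ [Y j]) ≠ z + 1) →
      lcsLen ((List.ofFn fun i =>
          gadgetSAGx (K + 1) ℓ dollar percent atSym D i.castSucc (n - m) (X i)) ++
        [gadgetSAGy (K + 1) ℓ dollar percent atSym D (Fin.last K) (n - m) Y]) = D - 1) := by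
  rw [lcsLen_gadgetSAG hK hda hpa (fun i a h => haS (hX i a _ h)) fun j h => haS (hY j _ h)]
  subst hD
  constructor
  · rintro ⟨Δ, hΔ, hgood⟩
    rw [(lcsLen_gadgetAG_le hSig hX hY hYlen hz).antisymm (le_lcsLen_gadgetAG
      (Nat.add_sub_cancel' hmn).symm hΔ (fun _ _ => rfl) fun j => (hgood j).ge)]
    exact max_eq_right (Nat.sub_le _ 1)
  · intro hbad
    refine max_eq_left (Nat.le_sub_one_of_lt (lt_of_not_ge fun hle => ?_))
    obtain ⟨Δ, a, hΔ, ha, hgood⟩ := exists_offsets_of_le_lcsLen_gadgetAG hSig hX hY hYlen hz hle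
    obtain ⟨j, hj⟩ := hbad Δ fun i => Nat.le_sub_of_add_le (hΔ i)
    refine hj ((hz _ j).antisymm ?_)
    simpa only [← ha] using hgood j

end AlignmentGadget

/-- perfect alignment gadget, Theorem `PerfectAlignmentWorks`. -/
theorem perfect_alignment_gadget
    {β : Type*} (k ℓ m n : ℕ) (hk : 2 ≤ k) (hℓ : 1 ≤ ℓ) (hm : 1 ≤ m) (hmn : m < n)
    (Sig : Set β)
    (X : Fin (k - 1) → Fin n → List β) (Y : Fin m → List β)
    (hXlen : ∀ i j, (X i j).length = ℓ) (hYlen : ∀ j, (Y j).length = ℓ)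
    (hXin : ∀ i j, ∀ c ∈ X i j, c ∈ Sig) (hYin : ∀ j, ∀ c ∈ Y j, c ∈ Sig)
    (dollar : Fin k → β) (percent atSym : β)
    (hdinj : Function.Injective dollar)
    (hdp : ∀ i, dollar i ≠ percent) (hda : ∀ i, dollar i ≠ atSym) (hpa : percent ≠ atSym)
    (hdS : ∀ i, dollar i ∉ Sig) (hpS : percent ∉ Sig) (haS : atSym ∉ Sig)
    (z : ℕ)
    (hz : ∀ (idx : Fin (k - 1) → Fin n) (jy : Fin m),
      lcsLen ((List.ofFn fun p => X p (idx p)) ++ [Y jy]) = z ∨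
      lcsLen ((List.ofFn fun p => X p (idx p)) ++ [Y jy]) = z + 1)
    (D : ℕ) (hD : D = 2 * ℓ * (2 * m + (k - 1) * n) + (z + 1) * m) :
    ((∃ Δ : Fin (k - 1) → ℕ, ∃ hΔ : ∀ p, Δ p ≤ n - m,
        ∀ jy : Fin m,
          lcsLen ((List.ofFn fun p =>
              X p ⟨Δ p + jy, by have h1 := hΔ p; have h2 := jy.isLt; omega⟩) ++ [Y jy])
            = z + 1) →
      lcsLen
        ((List.ofFn fun i : Fin (k - 1) =>
            gadgetSAGx k ℓ dollar percent atSym D (i.castLE (Nat.sub_le k 1)) (n - m) (X i))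
          ++ [gadgetSAGy k ℓ dollar percent atSym D ⟨k - 1, by omega⟩ (n - m) Y]) = D) ∧
    ((∀ (Δ : Fin (k - 1) → ℕ) (hΔ : ∀ p, Δ p ≤ n - m),
        ∃ jy : Fin m,
          lcsLen ((List.ofFn fun p =>
              X p ⟨Δ p + jy, by have h1 := hΔ p; have h2 := jy.isLt; omega⟩) ++ [Y jy])
            ≠ z + 1) →
      lcsLen
        ((List.ofFn fun i : Fin (k - 1) =>
            gadgetSAGx k ℓ dollar percent atSym D (i.castLE (Nat.sub_le k 1)) (n - m) (X i))
          ++ [gadgetSAGy k ℓ dollar percent atSym D ⟨k - 1, by omega⟩ (n - m) Y]) = D - 1) := by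
  obtain ⟨K, rfl⟩ : ∃ K, k = K + 1 := ⟨k - 1, by omega⟩
  exact perfect_alignment_gadget_general (by omega) hmn.le ⟨hdinj, hdp, hdS, hpS⟩ hXin hYin
    (fun j => (hYlen j).le) hda hpa haS
    (fun idx j => (hz idx j).elim (fun h => h.trans_le z.le_succ) Eq.le) hD
end

section
/- Fix integers k ≥ 2, ℓ ≥ 1, and 1 ≤ m < n. Let X_1, …, X_{k−1} be lists of n strings each and let Y be a list of m strings, where every string occurring in these lists has length exactly ℓ and is over an alphabet Σ. Suppose there is an integer z such that for every choice of strings S_1 ∈ X_1, …, S_{k−1} ∈ X_{k−1}, S_y ∈ Y, the value LCS(S_1, …, S_{k−1}, S_y) is either z or z+1. Let $_1, …, $_k, %, @ be k+2 pairwise distinct symbols not in Σ, and set A = $_1^{2ℓ} · $_2^{2ℓ} ⋯ $_k^{2ℓ}, A_{−i} = A with the block $_i^{2ℓ} removed, B = %^{2ℓ}, f = n − m, and D = 2ℓ(2m + (k−1)n) + zm + 1. Define AG_i(X_i) = A_{−i}^f · (A · X_i[1] · B) ⋯ (A · X_i[n] · B) · A_{−i}^f for i ∈ [1..k−1], AG_y(Y)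 = A_{−k}^f · (A · Y[1] · B) ⋯ (A · Y[m] · B) · A_{−k}^f, and SAG_i(X_i) = @^{D−1} · AG_i(X_i), SAG_y(Y) = AG_y(Y) · @^{D−1}. If there is exactly one tuple of indices (i_1, …, i_{k−1}, i_k) ∈ [1..n]^{k−1} × [1..m] with LCS(X_1[i_1], …, X_{k−1}[i_{k−1}], Y[i_k]) = z+1, and this tuple can be realized by a perfect alignment (i.e., there exist offsets Δ_1, …, Δ_{k−1} ∈ [0..n−m] with i_p = Δ_p + i_k for all p ∈ [1..k−1]), then LCS(SAG_1(X_1), …, SAG_{k−1}(X_{k−1}), SAG_y(Y)) = D. If no tuple of indices (i_1, …, i_{k−1}, i_k) ∈ [1..n]^{k−1} × [1..m] satisfies LCS(X_1[i_1], …, X_{k−1}[i_{k−1}], Y[i_k]) = z+1, then LCS(SAG_1(X_1), …, SAG_{k−1}(X_{k−1}), SAG_y(Y)) = D − 1. -/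
/-!
The padding `@^{D-1}` sits on opposite sides in `SAG_i` and `SAG_y`, so a common subsequence either
is a power of `@` or lives in the gadgets `AG`: the LCS is `max (D - 1) (LCS of the AG's)`.

Upper bound for the `AG`'s. Let `T` be a common subsequence and `Z` the part of `T` that is matched
inside a fixed `Y[j]`. Either every `X_i` has a string containing `Z`, and then `|Z|` is at most the
LCS of a tuple, or for some `i` the part of `AG_i` used by `Z` contains a whole block `$ᵢ^{2ℓ}`.
These `2ℓ ≥ |Z|` symbols are lost for `T`, whose dollar symbols other than `$_k` are otherwise
bounded only by their number in the `AG_i`, so the total is the same as if `Z` had been empty.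

Lower bound. Given offsets `Δ_i`, match `Y[j]` with `X_i[Δ_i + j]`. On the left, each of the `f`
copies of `A_{-k}` in `AG_y` has all of `$_1, …, $_{k-1}` available; the first `f - Δ_i` copies meet
copies of `A_{-i}` and drop the block of `$_i`, the remaining `Δ_i` meet full copies of `A`. On the
right the roles are exchanged, so the `r`-th copies on the two sides together retain exactly one
block of each of `$_1, …, $_{k-1}`.
-/

namespace AlignmentGadget

open scoped List

variable {β : Type*}

section LongestCommonSubsequence

theorem isGreatest_lcsLen {L : List (List β)} (hL : L ≠ []) :
    IsGreatest {m | ∃ T : List β, T.length = m ∧ ∀ s ∈ L, T <+ s} (lcsLen L) := by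
  obtain ⟨s, hs⟩ := List.exists_mem_of_ne_nil L hL
  have hne : {m | ∃ T : List β, T.length = m ∧ ∀ s ∈ L, T <+ s}.Nonempty :=
    ⟨0, [], rfl, fun _ _ => List.nil_sublist _⟩
  have hbdd : BddAbove {m | ∃ T : List β, T.length = m ∧ ∀ s ∈ L, T <+ s} := by
    refine ⟨s.length, ?_⟩
    rintro _ ⟨T, rfl, hT⟩
    exact (hT s hs).length_le
  exact ⟨Nat.sSup_mem hne hbdd, fun _ h => le_csSup hbdd h⟩

theorem forall_mem_ofFn_append_singleton {α : Type*} {K : ℕ} {F : Fin K → α} {G : α}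
    {P : α → Prop} : (∀ s ∈ List.ofFn F ++ [G], P s) ↔ (∀ i, P (F i)) ∧ P G := by
  rw [List.forall_mem_append, List.forall_mem_ofFn_iff, List.forall_mem_singleton]

variable {K : ℕ} {F : Fin K → List β} {G T : List β}

theorem length_le_lcsLen (hF : ∀ i, T <+ F i) (hG : T <+ G) :
    T.length ≤ lcsLen (List.ofFn F ++ [G]) :=
  (isGreatest_lcsLen (by simp)).2 ⟨T, rfl, forall_mem_ofFn_append_singleton.2 ⟨hF, hG⟩⟩

theorem exists_length_eq_lcsLen (F : Fin K → List β) (G : List β) :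
    ∃ T : List β, T.length = lcsLen (List.ofFn F ++ [G]) ∧ (∀ i, T <+ F i) ∧ T <+ G := by
  obtain ⟨T, hlen, hT⟩ := (isGreatest_lcsLen (L := List.ofFn F ++ [G]) (by simp)).1
  exact ⟨T, hlen, forall_mem_ofFn_append_singleton.1 hT⟩

end LongestCommonSubsequence

section Sublists

theorem sublist_of_sublist_append_left {T L R : List β} (hT : T <+ L ++ R)
    (hdisj : T.Disjoint L) : T <+ R := by
  obtain ⟨T₁, T₂, rfl, h₁, h₂⟩ := List.sublist_append_iff.1 hT
  obtain rfl : T₁ = [] := List.eq_nil_iff_forall_not_mem.2 fun c hc =>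
    hdisj (List.mem_append_left _ hc) (h₁.subset hc)
  exact h₂

theorem sublist_of_sublist_append_right {T L R : List β} (hT : T <+ L ++ R)
    (hdisj : T.Disjoint R) : T <+ L := by
  rw [← List.reverse_sublist, List.reverse_append] at hT
  exact List.reverse_sublist.1 (sublist_of_sublist_append_left hT
    (List.disjoint_reverse_left.2 (List.disjoint_reverse_right.2 hdisj)))

theorem disjoint_replicate_of_notMem {T : List β} {d : β} (hd : d ∉ T) (c : ℕ) :
    T.Disjoint (List.replicate c d) :=
  fun _ hx hxd => hd (List.eq_of_mem_replicate hxd ▸ hx)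

theorem flatten_ofFn_sublist {n : ℕ} {g h : Fin n → List β} (H : ∀ j, g j <+ h j) :
    (List.ofFn g).flatten <+ (List.ofFn h).flatten :=
  List.sublist_flatten_iff.2 ⟨List.ofFn g, rfl, by simp +contextual [H]⟩

theorem mem_strPow {W : List β} {f : ℕ} {c : β} (h : c ∈ strPow W f) : c ∈ W := by
  obtain ⟨l, hl, hc⟩ := List.mem_flatten.1 h
  exact List.eq_of_mem_replicate hl ▸ hc

theorem flatten_ofFn_sublist_strPow {a f : ℕ} {W : List β} {R : Fin a → List β} (haf : a ≤ f)
    (hR : ∀ r, R r <+ W) : (List.ofFn R).flatten <+ strPow W f := by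
  refine (flatten_ofFn_sublist hR).trans ?_
  rw [List.ofFn_const]
  exact ((List.replicate_sublist_replicate W).2 haf).flatten

theorem length_le_countP_add_sum_count [DecidableEq β] {ι : Type*} [Fintype ι] (p : β → Bool)
    (d : ι → β) {T : List β} (hT : ∀ c ∈ T, p c ∨ ∃ i, c = d i) :
    T.length ≤ T.countP p + ∑ i, T.count (d i) := by
  induction T with
  | nil => simp
  | cons c T ih =>
    have ih := ih fun x hx => hT x (List.mem_cons_of_mem _ hx)
    have hc : 1 ≤ (if p c then 1 else 0) + ∑ i, if c == d i then 1 else 0 := by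
      rcases hT c List.mem_cons_self with hp | ⟨i, rfl⟩
      · simp [hp]
      · refine le_add_left (le_trans (by simp) (Finset.single_le_sum
          (f := fun j => if d i == d j then 1 else 0) (fun _ _ => Nat.zero_le _)
          (Finset.mem_univ i)))
    simp only [List.length_cons, List.countP_cons, List.count_cons, Finset.sum_add_distrib]
    omega

end Sublists

section Selection

theorem length_le_or_sublist {s : β} {N : ℕ} {G₁ G₂ T : List β} (hs : s ∉ G₂)
    (h₁ : T <+ List.replicate N s ++ G₁) (h₂ : T <+ G₂ ++ List.replicate N s) :
    T.length ≤ N ∨ T <+ G₁ := by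
  obtain ⟨L₁, L₂, rfl, hL₁, hL₂⟩ := List.sublist_append_iff.1 h₁
  obtain ⟨_ | a, -, rfl⟩ := List.sublist_replicate_iff.1 hL₁
  · exact Or.inr hL₂
  left
  obtain ⟨M₁, M₂, hM, hM₁, hM₂⟩ := List.sublist_append_iff.1 h₂
  rcases M₁ with _ | ⟨x, M₁⟩
  · rw [hM]
    simpa using hM₂.length_le
  · rw [List.replicate_succ, List.cons_append, List.cons_append, List.cons.injEq] at hM
    exact absurd (hM₁.subset (hM.1 ▸ List.mem_cons_self)) hs

theorem lcsLen_replicate_append {K : ℕ} {s : β} (N : ℕ) {G : Fin K → List β} {Gy : List β}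
    (i₀ : Fin K) (hG : s ∉ G i₀) (hGy : s ∉ Gy) :
    lcsLen (List.ofFn (fun i => List.replicate N s ++ G i) ++ [Gy ++ List.replicate N s]) =
      max N (lcsLen (List.ofFn G ++ [Gy])) := by
  apply le_antisymm
  · obtain ⟨T, hlen, hTG, hTy⟩ := exists_length_eq_lcsLen
      (fun i => List.replicate N s ++ G i) (Gy ++ List.replicate N s)
    rw [← hlen, le_max_iff, or_iff_not_imp_left]
    intro hN
    have hTG' : ∀ i, T <+ G i := fun i =>
      (length_le_or_sublist hGy (hTG i) hTy).resolve_left hN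
    have hsT : s ∉ T := fun h => hG ((hTG' i₀).subset h)
    exact length_le_lcsLen hTG'
      (sublist_of_sublist_append_right hTy (disjoint_replicate_of_notMem hsT N))
  · refine max_le ?_ ?_
    · simpa only [List.length_replicate] using length_le_lcsLen (T := List.replicate N s)
        (fun i => List.sublist_append_left _ (G i)) (List.sublist_append_right Gy _)
    · obtain ⟨T, hlen, hTG, hTy⟩ := exists_length_eq_lcsLen G Gy
      rw [← hlen]
      exact length_le_lcsLen (fun i => (hTG i).trans (List.sublist_append_right _ _))
        (hTy.trans (List.sublist_append_left _ _))

end Selection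

section SeparatedBlocks

variable [DecidableEq β] {d : β} {c : ℕ} {Z H : List β}

theorem le_count_or_sublist_of_infix_append_replicate {L R : List β} (hd : d ∉ Z) (hZ : Z <+ H)
    (hH : H <:+: L ++ (List.replicate c d ++ R)) :
    c ≤ H.count d ∨ Z <+ L ∨ ∃ H', H' <:+: R ∧ H' <+ H ∧ Z <+ H' := by
  have hdZ := disjoint_replicate_of_notMem hd c
  rcases List.infix_append_iff.1 hH with h | h | ⟨H₁, H₂, rfl, h₁, h₂⟩
  · exact Or.inr (Or.inl (hZ.trans h.sublist))
  · rcases List.infix_append_iff.1 h with h | h | ⟨H₁, H₂, rfl, h₁, h₂⟩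
    · have hZnil : Z <+ [] := sublist_of_sublist_append_right (hZ.trans h.sublist) hdZ
      exact Or.inr (Or.inl (hZnil.trans (List.nil_sublist _)))
    · exact Or.inr (Or.inr ⟨H, h, List.Sublist.refl _, hZ⟩)
    · refine Or.inr (Or.inr ⟨H₂, h₂.isInfix, List.sublist_append_right _ _, ?_⟩)
      exact sublist_of_sublist_append_left hZ (List.disjoint_of_subset_right h₁.subset hdZ)
  · rcases List.prefix_or_prefix_of_prefix h₂ (List.prefix_append _ _) with h | h
    · refine Or.inr (Or.inl (List.Sublist.trans ?_ h₁.sublist))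
      exact sublist_of_sublist_append_right hZ (List.disjoint_of_subset_right h.subset hdZ)
    · left
      calc c = (List.replicate c d).count d := List.count_replicate_self.symm
        _ ≤ H₂.count d := h.sublist.count_le d
        _ ≤ (H₁ ++ H₂).count d := (List.sublist_append_right _ _).count_le d

theorem le_count_or_sublist_of_infix_append_flatMap (Xs : List (List β)) {L : List β}
    (hd : d ∉ Z) (hZ : Z <+ H)
    (hH : H <:+: L ++ Xs.flatMap fun x => List.replicate c d ++ x) :
    c ≤ H.count d ∨ Z <+ L ∨ ∃ x ∈ Xs, Z <+ x := by
  induction Xs generalizing L H with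
  | nil =>
    rw [List.flatMap_nil, List.append_nil] at hH
    exact Or.inr (Or.inl (hZ.trans hH.sublist))
  | cons x Xs ih =>
    rw [List.flatMap_cons, List.append_assoc] at hH
    rcases le_count_or_sublist_of_infix_append_replicate hd hZ hH with
      h | h | ⟨H', hH', hHH', hZ'⟩
    · exact Or.inl h
    · exact Or.inr (Or.inl h)
    · rcases ih hZ' hH' with h | h | ⟨y, hy, h⟩
      · exact Or.inl (h.trans (hHH'.count_le d))
      · exact Or.inr (Or.inr ⟨x, List.mem_cons_self, h⟩)
      · exact Or.inr (Or.inr ⟨y, List.mem_cons_of_mem _ hy, h⟩)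

end SeparatedBlocks

section DollarRows

variable {k : ℕ} {ℓ : ℕ} {dollar : Fin k → β}

/-- The concatenation of the blocks `$ⱼ^{2ℓ}` with `j ∈ S`, in increasing order of `j`; the strings
`A` and `A₋ᵢ` are the cases `S = univ` and `S = {i}ᶜ`. -/
def dollarRow (ℓ : ℕ) (dollar : Fin k → β) (S : Finset (Fin k)) : List β :=
  (List.ofFn fun j => if j ∈ S then List.replicate (2 * ℓ) (dollar j) else []).flatten

theorem gadgetA_eq_dollarRow : gadgetA k ℓ dollar = dollarRow ℓ dollar Finset.univ := by
  simp [gadgetA, dollarRow]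

theorem gadgetAminus_eq_dollarRow (i : Fin k) :
    gadgetAminus k ℓ dollar i = dollarRow ℓ dollar {i}ᶜ := by
  simp [gadgetAminus, dollarRow, ite_not]

theorem dollarRow_sublist_dollarRow {S S' : Finset (Fin k)} (h : S ⊆ S') :
    dollarRow ℓ dollar S <+ dollarRow ℓ dollar S' := by
  refine flatten_ofFn_sublist fun j => ?_
  by_cases hj : j ∈ S
  · simp [hj, h hj]
  · simp [hj]

theorem exists_eq_dollar_of_mem_dollarRow {S : Finset (Fin k)} {c : β}
    (h : c ∈ dollarRow ℓ dollar S) : ∃ i, c = dollar i := by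
  simp only [dollarRow, List.mem_flatten, List.mem_ofFn] at h
  obtain ⟨_, ⟨i, rfl⟩, hc⟩ := h
  split_ifs at hc
  · exact ⟨i, List.eq_of_mem_replicate hc⟩
  · simp at hc

theorem length_dollarRow (S : Finset (Fin k)) :
    (dollarRow ℓ dollar S).length = S.card * (2 * ℓ) := by
  simp [dollarRow, List.length_flatten, List.sum_ofFn, apply_ite List.length]

theorem count_dollarRow [DecidableEq β] (hinj : Function.Injective dollar) (S : Finset (Fin k))
    (i : Fin k) : (dollarRow ℓ dollar S).count (dollar i) = if i ∈ S then 2 * ℓ else 0 := by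
  simp only [dollarRow, List.count_flatten, List.map_ofFn, List.sum_ofFn, Function.comp_apply,
    apply_ite (List.count (dollar i)), List.count_replicate, List.count_nil, beq_iff_eq,
    hinj.eq_iff]
  rw [Finset.sum_eq_single i (fun j _ hj => by simp [hj]) (by simp)]
  simp

end DollarRows

section AlignmentGadgets

variable {k ℓ f n : ℕ} {dollar : Fin k → β} {percent : β} {Sig : Set β} {i : Fin k}
  {X : Fin n → List β}

theorem mem_gadgetAG (hX : ∀ j, ∀ c ∈ X j, c ∈ Sig) {c : β}
    (h : c ∈ gadgetAG k ℓ dollar percent i f X) :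
    c ∈ Sig ∨ c = percent ∨ ∃ i, c = dollar i := by
  simp only [gadgetAG, gadgetAminus_eq_dollarRow, gadgetA_eq_dollarRow, List.mem_append,
    List.mem_flatten, List.mem_ofFn] at h
  rcases h with (h | ⟨_, ⟨j, rfl⟩, h⟩) | h
  · exact Or.inr (Or.inr (exists_eq_dollar_of_mem_dollarRow (mem_strPow h)))
  · rcases List.mem_append.1 h with h | h
    · rcases List.mem_append.1 h with h | h
      · exact Or.inr (Or.inr (exists_eq_dollar_of_mem_dollarRow h))
      · exact Or.inl (hX j c h)
    · exact Or.inr (Or.inl (List.eq_of_mem_replicate h))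
  · exact Or.inr (Or.inr (exists_eq_dollar_of_mem_dollarRow (mem_strPow h)))

variable [DecidableEq β]

theorem count_percent_gadgetAG (hdp : ∀ i, dollar i ≠ percent) (hpS : percent ∉ Sig)
    (hX : ∀ j, ∀ c ∈ X j, c ∈ Sig) :
    (gadgetAG k ℓ dollar percent i f X).count percent = n * (2 * ℓ) := by
  have hXcount : ∀ j, (X j).count percent = 0 := fun j =>
    List.count_eq_zero.2 fun h => hpS (hX j _ h)
  have hrow : ∀ S, (dollarRow ℓ dollar S).count percent = 0 := fun S =>
    List.count_eq_zero.2 fun h => by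
      obtain ⟨i, hi⟩ := exists_eq_dollar_of_mem_dollarRow h
      exact hdp i hi.symm
  simp [gadgetAG, strPow, gadgetAminus_eq_dollarRow, gadgetA_eq_dollarRow, List.count_flatten,
    Function.comp_def, hXcount, hrow]

theorem filter_dollarRow [DecidablePred (· ∈ Sig)] (hinj : Function.Injective dollar)
    (hdS : ∀ i, dollar i ∉ Sig) (S : Finset (Fin k)) (i : Fin k) :
    (dollarRow ℓ dollar S).filter (fun c => c = dollar i ∨ c ∈ Sig) =
      if i ∈ S then List.replicate (2 * ℓ) (dollar i) else [] := by
  have hfilter : (dollarRow ℓ dollar S).filter (fun c => c = dollar i ∨ c ∈ Sig) =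
      (dollarRow ℓ dollar S).filter (· = dollar i) := by
    refine List.filter_congr fun c hc => ?_
    obtain ⟨j, rfl⟩ := exists_eq_dollar_of_mem_dollarRow hc
    simp [hdS j]
  rw [hfilter, List.filter_eq, count_dollarRow hinj]
  split_ifs <;> rfl

theorem filter_gadgetAG [DecidablePred (· ∈ Sig)] (hinj : Function.Injective dollar)
    (hdS : ∀ i, dollar i ∉ Sig) (hdp : ∀ i, dollar i ≠ percent) (hpS : percent ∉ Sig)
    (hX : ∀ j, ∀ c ∈ X j, c ∈ Sig) :
    (gadgetAG k ℓ dollar percent i f X).filter (fun c => c = dollar i ∨ c ∈ Sig) =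
      (List.ofFn X).flatMap fun x => List.replicate (2 * ℓ) (dollar i) ++ x := by
  have hXfilter : ∀ j, (X j).filter (fun c => c = dollar i ∨ c ∈ Sig) = X j := fun j =>
    List.filter_eq_self.2 fun c hc => by simp [hX j c hc]
  simp only [gadgetAG, strPow, gadgetAminus_eq_dollarRow, gadgetA_eq_dollarRow, List.filter_append,
    List.filter_flatten, List.map_replicate, List.map_ofFn, Function.comp_def,
    filter_dollarRow hinj hdS, hXfilter, List.flatMap_def]
  simp [(hdp i).symm, hpS]

theorem count_dollar_gadgetAG (hinj : Function.Injective dollar) (hdS : ∀ i, dollar i ∉ Sig)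
    (hdp : ∀ i, dollar i ≠ percent) (hpS : percent ∉ Sig) (hX : ∀ j, ∀ c ∈ X j, c ∈ Sig) :
    (gadgetAG k ℓ dollar percent i f X).count (dollar i) = n * (2 * ℓ) := by
  classical
  have hXcount : ∀ j, (X j).count (dollar i) = 0 := fun j =>
    List.count_eq_zero.2 fun h => hdS i (hX j _ h)
  rw [← List.count_filter (p := fun c => c = dollar i ∨ c ∈ Sig) (by simp),
    filter_gadgetAG hinj hdS hdp hpS hX]
  simp [List.count_flatMap, Function.comp_def, hXcount]

theorem le_count_or_sublist_of_infix_gadgetAG (hinj : Function.Injective dollar)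
    (hdS : ∀ i, dollar i ∉ Sig) (hdp : ∀ i, dollar i ≠ percent) (hpS : percent ∉ Sig)
    (hX : ∀ j, ∀ c ∈ X j, c ∈ Sig) {Z H : List β} (hne : Z ≠ []) (hZ : ∀ c ∈ Z, c ∈ Sig)
    (hZH : Z <+ H) (hH : H <:+: gadgetAG k ℓ dollar percent i f X) :
    2 * ℓ ≤ H.count (dollar i) ∨ ∃ j, Z <+ X j := by
  classical
  have hHfilter := hH.filter fun c => c = dollar i ∨ c ∈ Sig
  rw [filter_gadgetAG hinj hdS hdp hpS hX] at hHfilter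
  have hZfilter := hZH.filter fun c => c = dollar i ∨ c ∈ Sig
  rw [List.filter_eq_self.2 fun c hc => by simp [hZ c hc]] at hZfilter
  rcases le_count_or_sublist_of_infix_append_flatMap (List.ofFn X) (L := [])
    (fun h => hdS i (hZ _ h)) hZfilter hHfilter with h | h | ⟨x, hx, hZx⟩
  · rw [List.count_filter (by simp)] at h
    exact Or.inl h
  · exact absurd (List.sublist_nil.1 h) hne
  · obtain ⟨j, rfl⟩ := List.mem_ofFn.1 hx
    exact Or.inr ⟨j, hZx⟩

end AlignmentGadgets

section ChargeBounds

variable {ι : Type*} [Fintype ι] [DecidableEq β] {Sig : Set β} [DecidablePred (· ∈ Sig)]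
  {d : ι → β} {G : ι → List β}

/-- Amortised bound for subsequences `T` of `L` that embed into a window `H i` of each `G i`: the
letters of `T` lying in `Sig` are paid for by a budget `w` and by those occurrences of the
separators `d i` in the windows that `T` does not use. -/
def ChargeBound (Sig : Set β) [DecidablePred (· ∈ Sig)] (d : ι → β) (G : ι → List β)
    (L : List β) (w : ℕ) : Prop :=
  ∀ (T : List β) (H : ι → List β), T <+ L → (∀ i, T <+ H i) → (∀ i, H i <:+: G i) →
    T.countP (· ∈ Sig) + ∑ i, T.count (d i) ≤ w + ∑ i, (H i).count (d i)

namespace ChargeBound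

theorem append {L₁ L₂ : List β} {w₁ w₂ : ℕ} (h₁ : ChargeBound Sig d G L₁ w₁)
    (h₂ : ChargeBound Sig d G L₂ w₂) : ChargeBound Sig d G (L₁ ++ L₂) (w₁ + w₂) := by
  intro T H hTL hTH hHG
  obtain ⟨T₁, T₂, rfl, hT₁, hT₂⟩ := List.sublist_append_iff.1 hTL
  choose H₁ H₂ hH hTH₁ hTH₂ using fun i => List.append_sublist_iff.1 (hTH i)
  obtain rfl : H = fun i => H₁ i ++ H₂ i := funext hH
  have hle₁ := h₁ T₁ H₁ hT₁ hTH₁ fun i => (List.prefix_append _ _).isInfix.trans (hHG i)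
  have hle₂ := h₂ T₂ H₂ hT₂ hTH₂ fun i => (List.suffix_append _ _).isInfix.trans (hHG i)
  simp only [List.countP_append, List.count_append, Finset.sum_add_distrib]
  omega

theorem of_forall_notMem {L : List β} (hL : ∀ c ∈ L, c ∉ Sig) : ChargeBound Sig d G L 0 := by
  intro T H hTL hTH _
  have hT : T.countP (· ∈ Sig) = 0 :=
    List.countP_eq_zero.2 fun c hc => by simpa using hL c (hTL.subset hc)
  rw [hT]
  exact Nat.add_le_add_left (Finset.sum_le_sum fun i _ => (hTH i).count_le (d i)) 0

theorem flatten_ofFn {m : ℕ} {L : Fin m → List β} {w : Fin m → ℕ}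
    (h : ∀ j, ChargeBound Sig d G (L j) (w j)) :
    ChargeBound Sig d G (List.ofFn L).flatten (∑ j, w j) := by
  induction m with
  | zero => simpa using of_forall_notMem (L := []) (by simp)
  | succ m ih =>
    rw [List.ofFn_succ, List.flatten_cons, Fin.sum_univ_succ]
    exact (h 0).append (ih fun j => h j.succ)

end ChargeBound

end ChargeBounds

section UpperBound

variable {K ℓ f m n : ℕ} {dollar : Fin (K + 1) → β} {percent : β} {Sig : Set β}
  {X : Fin K → Fin n → List β} {Y : Fin m → List β}

-- If some `X i` has no string containing the matched part `Z` of `y`, then `Z` spreads over a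
-- whole block `$ᵢ^{2ℓ}` that it cannot use, and that block pays for all of `Z`.
theorem chargeBound_of_lcsLen_le [DecidableEq β] [DecidablePred (· ∈ Sig)]
    (hinj : Function.Injective dollar) (hdS : ∀ i, dollar i ∉ Sig)
    (hdp : ∀ i, dollar i ≠ percent) (hpS : percent ∉ Sig) (hX : ∀ i j, ∀ c ∈ X i j, c ∈ Sig)
    {y : List β} (hy : ∀ c ∈ y, c ∈ Sig) (hylen : y.length ≤ 2 * ℓ) {w : ℕ}
    (hw : ∀ idx : Fin K → Fin n, lcsLen ((List.ofFn fun p => X p (idx p)) ++ [y]) ≤ w) :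
    ChargeBound Sig (fun i : Fin K => dollar i.castSucc)
      (fun i => gadgetAG (K + 1) ℓ dollar percent i.castSucc f (X i)) y w := by
  intro Z H hZy hZH hHG
  have hZ : ∀ c ∈ Z, c ∈ Sig := fun c hc => hy c (hZy.subset hc)
  have hZd : ∑ i : Fin K, Z.count (dollar i.castSucc) = 0 :=
    Finset.sum_eq_zero fun i _ => List.count_eq_zero.2 fun h => hdS _ (hZ _ h)
  suffices hlen : Z.length ≤ w + ∑ i, (H i).count (dollar i.castSucc) by
    simpa only [hZd, add_zero] using List.countP_le_length.trans hlen
  rcases eq_or_ne Z [] with rfl | hne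
  · simp
  have hblock : ∀ i, 2 * ℓ ≤ (H i).count (dollar i.castSucc) ∨ ∃ j, Z <+ X i j := fun i =>
    le_count_or_sublist_of_infix_gadgetAG hinj hdS hdp hpS (hX i) hne hZ (hZH i) (hHG i)
  by_cases hcommon : ∀ i, ∃ j, Z <+ X i j
  · choose idx hidx using hcommon
    exact ((length_le_lcsLen hidx hZy).trans (hw idx)).trans (Nat.le_add_right _ _)
  · obtain ⟨i, hi⟩ := not_forall.1 hcommon
    calc Z.length ≤ 2 * ℓ := hZy.length_le.trans hylen
      _ ≤ (H i).count (dollar i.castSucc) := (hblock i).resolve_right hi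
      _ ≤ ∑ i, (H i).count (dollar i.castSucc) :=
        Finset.single_le_sum (f := fun i => (H i).count (dollar i.castSucc))
          (fun _ _ => Nat.zero_le _) (Finset.mem_univ i)
      _ ≤ _ := Nat.le_add_left _ _

theorem chargeBound_gadgetAG [DecidableEq β] [DecidablePred (· ∈ Sig)] {k : ℕ}
    {dollar : Fin k → β} {i : Fin k} {ι : Type*} [Fintype ι]
    {d : ι → β} {G : ι → List β} {w : Fin m → ℕ} (hdS : ∀ i, dollar i ∉ Sig) (hpS : percent ∉ Sig)
    (h : ∀ j, ChargeBound Sig d G (Y j) (w j)) :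
    ChargeBound Sig d G (gadgetAG k ℓ dollar percent i f Y) (∑ j, w j) := by
  have hrow : ∀ S, ∀ c ∈ dollarRow ℓ dollar S, c ∉ Sig := fun S c hc => by
    obtain ⟨i, rfl⟩ := exists_eq_dollar_of_mem_dollarRow hc
    exact hdS i
  have hpercent : ∀ c ∈ List.replicate (2 * ℓ) percent, c ∉ Sig := fun c hc =>
    List.eq_of_mem_replicate hc ▸ hpS
  rw [gadgetAG, gadgetA_eq_dollarRow, gadgetAminus_eq_dollarRow]
  have hpad : ChargeBound Sig d G (strPow (dollarRow ℓ dollar {i}ᶜ) f) 0 :=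
    .of_forall_notMem fun c hc => hrow _ c (mem_strPow hc)
  have hblock : ∀ j, ChargeBound Sig d G
      (dollarRow ℓ dollar Finset.univ ++ Y j ++ List.replicate (2 * ℓ) percent) (0 + w j + 0) :=
    fun j => ((ChargeBound.of_forall_notMem (hrow _)).append (h j)).append
      (.of_forall_notMem hpercent)
  simpa only [zero_add, add_zero] using (hpad.append (.flatten_ofFn hblock)).append hpad

theorem lcsLen_gadgetAG_le (hinj : Function.Injective dollar) (hdS : ∀ i, dollar i ∉ Sig)
    (hdp : ∀ i, dollar i ≠ percent) (hpS : percent ∉ Sig)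
    (hX : ∀ i j, ∀ c ∈ X i j, c ∈ Sig) (hY : ∀ j, ∀ c ∈ Y j, c ∈ Sig)
    (hYlen : ∀ j, (Y j).length ≤ 2 * ℓ) {w : Fin m → ℕ}
    (hw : ∀ (idx : Fin K → Fin n) (j : Fin m),
      lcsLen ((List.ofFn fun p => X p (idx p)) ++ [Y j]) ≤ w j) :
    lcsLen ((List.ofFn fun i : Fin K =>
        gadgetAG (K + 1) ℓ dollar percent i.castSucc f (X i)) ++
      [gadgetAG (K + 1) ℓ dollar percent (Fin.last K) f Y]) ≤
      2 * ℓ * (2 * m + K * n) + ∑ j, w j := by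
  classical
  obtain ⟨T, hlen, hTX, hTY⟩ := exists_length_eq_lcsLen
    (fun i : Fin K => gadgetAG (K + 1) ℓ dollar percent i.castSucc f (X i))
    (gadgetAG (K + 1) ℓ dollar percent (Fin.last K) f Y)
  have hcharge := chargeBound_gadgetAG hdS hpS
    (fun j => chargeBound_of_lcsLen_le hinj hdS hdp hpS hX (hY j) (hYlen j) fun idx => hw idx j)
    T _ hTY hTX fun _ => List.infix_rfl
  simp only [count_dollar_gadgetAG hinj hdS hdp hpS (hX _), Finset.sum_const, Finset.card_univ,
    Fintype.card_fin, smul_eq_mul] at hcharge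
  have hpercent : T.count percent ≤ m * (2 * ℓ) :=
    count_percent_gadgetAG hdp hpS hY ▸ hTY.count_le percent
  have hlast : T.count (dollar (Fin.last K)) ≤ m * (2 * ℓ) :=
    count_dollar_gadgetAG hinj hdS hdp hpS hY ▸ hTY.count_le _
  have hT := length_le_countP_add_sum_count (T := T) (fun c => c ∈ Sig)
    (fun o : Option (Fin (K + 1)) => o.elim percent dollar) fun c hc => by
      simpa [Option.exists] using mem_gadgetAG hY (hTY.subset hc)
  simp only [Fintype.sum_option, Fin.sum_univ_castSucc, Option.elim_none, Option.elim_some] at hT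
  linarith

end UpperBound

section LowerBound

theorem dollarRow_sublist_gadgetA {k ℓ : ℕ} {dollar : Fin k → β} (S : Finset (Fin k)) :
    dollarRow ℓ dollar S <+ gadgetA k ℓ dollar :=
  gadgetA_eq_dollarRow (ℓ := ℓ) ▸ dollarRow_sublist_dollarRow (Finset.subset_univ S)

theorem dollarRow_sublist_gadgetAminus {k ℓ : ℕ} {dollar : Fin k → β} {S : Finset (Fin k)}
    {i : Fin k} (hi : i ∉ S) : dollarRow ℓ dollar S <+ gadgetAminus k ℓ dollar i :=
  gadgetAminus_eq_dollarRow (ℓ := ℓ) i ▸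
    dollarRow_sublist_dollarRow
      (Finset.subset_compl_iff_disjoint_left.2 (Finset.disjoint_singleton_left.2 hi))

/-- The string `A_{P 0} ⋯ A_{P (f-1)} · (A · Z[1] · B) ⋯ (A · Z[m] · B) · A_{Q 0} ⋯ A_{Q (f-1)}`
with `A_S` standing for `dollarRow ℓ dollar S`: the shape of the common subsequence produced by a
perfect alignment. -/
def alignedString {k : ℕ} (ℓ : ℕ) (dollar : Fin k → β) (percent : β) {f m : ℕ}
    (P Q : Fin f → Finset (Fin k)) (Z : Fin m → List β) : List β :=
  (List.ofFn fun r => dollarRow ℓ dollar (P r)).flatten ++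
    (List.ofFn fun j => gadgetA k ℓ dollar ++ Z j ++ List.replicate (2 * ℓ) percent).flatten ++
    (List.ofFn fun r => dollarRow ℓ dollar (Q r)).flatten

variable {k ℓ f m n : ℕ} {dollar : Fin k → β} {percent : β} {P Q : Fin f → Finset (Fin k)}
  {Z : Fin m → List β} {i : Fin k}

theorem length_alignedString :
    (alignedString ℓ dollar percent P Q Z).length =
      2 * ℓ * (∑ r, ((P r).card + (Q r).card) + m * (k + 1)) + ∑ j, (Z j).length := by
  simp only [alignedString, gadgetA_eq_dollarRow, List.length_append, List.length_flatten,
    List.map_ofFn, List.sum_ofFn, Function.comp_apply, length_dollarRow, List.length_replicate,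
    Finset.card_univ, Fintype.card_fin, Finset.sum_add_distrib, Finset.sum_const, smul_eq_mul,
    ← Finset.sum_mul]
  ring

theorem alignedString_sublist_gadgetAG (hP : ∀ r, i ∉ P r) (hQ : ∀ r, i ∉ Q r)
    {Y : Fin m → List β} (hZ : ∀ j, Z j <+ Y j) :
    alignedString ℓ dollar percent P Q Z <+ gadgetAG k ℓ dollar percent i f Y :=
  ((flatten_ofFn_sublist_strPow le_rfl fun r => dollarRow_sublist_gadgetAminus (hP r)).append
    (flatten_ofFn_sublist fun j => ((List.Sublist.refl _).append (hZ j)).append_right _)).append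
    (flatten_ofFn_sublist_strPow le_rfl fun r => dollarRow_sublist_gadgetAminus (hQ r))

-- The first `e` strings of `P` go into the left padding and the other `Δ` into the blocks before
-- the aligned ones; symmetrically, `e` strings of `Q` go into the blocks after the aligned ones.
theorem alignedString_sublist_gadgetAG_of_offset {e Δ : ℕ} (hf : f = e + Δ) (hn : n = Δ + m + e)
    {X : Fin n → List β} (hP : ∀ r : Fin f, r < e → i ∉ P r) (hQ : ∀ r : Fin f, e ≤ r → i ∉ Q r)
    (hZ : ∀ j : Fin m, Z j <+ X ⟨Δ + j, by omega⟩) :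
    alignedString ℓ dollar percent P Q Z <+ gadgetAG k ℓ dollar percent i f X := by
  subst hf hn
  have hblock : ∀ (S : Finset (Fin k)) (x : List β),
      dollarRow ℓ dollar S <+ gadgetA k ℓ dollar ++ x ++ List.replicate (2 * ℓ) percent :=
    fun S x => (dollarRow_sublist_gadgetA S).trans
      ((List.sublist_append_left _ _).trans (List.sublist_append_left _ _))
  rw [alignedString, gadgetAG]
  simp only [List.ofFn_add, List.flatten_append, List.append_assoc]
  refine .append (flatten_ofFn_sublist_strPow (Nat.le_add_right e Δ) fun r => ?_) (.append ?_
    (.append ?_ (.append ?_ (flatten_ofFn_sublist_strPow (Nat.le_add_left Δ e) fun r => ?_))))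
  · exact dollarRow_sublist_gadgetAminus (hP _ r.2)
  · exact flatten_ofFn_sublist fun j => by simpa using hblock _ _
  · exact flatten_ofFn_sublist fun j => (((hZ j).append_right _).append_left _)
  · exact flatten_ofFn_sublist fun j => by simpa using hblock _ _
  · exact dollarRow_sublist_gadgetAminus (hQ _ (Nat.le_add_right e r))

theorem le_lcsLen_gadgetAG {K : ℕ} {dollar : Fin (K + 1) → β} {X : Fin K → Fin n → List β}
    {Y : Fin m → List β} (hn : n = f + m) {Δ : Fin K → ℕ} (hΔ : ∀ p, Δ p ≤ f) :
    2 * ℓ * (2 * m + K * n) +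
        ∑ j : Fin m, lcsLen ((List.ofFn fun p => X p ⟨Δ p + j, by have := hΔ p; omega⟩) ++ [Y j]) ≤
      lcsLen ((List.ofFn fun i : Fin K =>
          gadgetAG (K + 1) ℓ dollar percent i.castSucc f (X i)) ++
        [gadgetAG (K + 1) ℓ dollar percent (Fin.last K) f Y]) := by
  choose Z hlen hZX hZY using fun j : Fin m => exists_length_eq_lcsLen
    (fun p => X p ⟨Δ p + j, by have := hΔ p; omega⟩) (Y j)
  let P : Fin f → Finset (Fin (K + 1)) := fun r =>
    ({p | ¬ r + Δ p < f} : Finset (Fin K)).map Fin.castSuccEmb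
  let Q : Fin f → Finset (Fin (K + 1)) := fun r =>
    ({p | r + Δ p < f} : Finset (Fin K)).map Fin.castSuccEmb
  have hcard : ∀ r, (P r).card + (Q r).card = K := fun r => by
    simp only [P, Q, Finset.card_map]
    rw [add_comm, Finset.card_filter_add_card_filter_not, Finset.card_univ, Fintype.card_fin]
  calc _ = (alignedString ℓ dollar percent P Q Z).length := by
        simp only [length_alignedString, hcard, hlen, Finset.sum_const, Finset.card_univ,
          Fintype.card_fin, smul_eq_mul, hn]
        ring
    _ ≤ _ := by
        refine length_le_lcsLen (fun p => ?_) (alignedString_sublist_gadgetAG ?_ ?_ hZY)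
        · have := hΔ p
          refine alignedString_sublist_gadgetAG_of_offset (e := f - Δ p) (Δ := Δ p) (by omega)
            (by omega) ?_ ?_ fun j => hZX j p
          · exact fun r hr => by simpa [P] using show r + Δ p < f by omega
          · exact fun r hr => by simpa [Q] using show f ≤ r + Δ p by omega
        · simp [P]
        · simp [Q]

end LowerBound

theorem lcsLen_gadgetAG_eq {K ℓ f m n : ℕ} (hn : n = f + m)
    {dollar : Fin (K + 1) → β} {percent : β} {Sig : Set β}
    (hinj : Function.Injective dollar) (hdS : ∀ i, dollar i ∉ Sig)
    (hdp : ∀ i, dollar i ≠ percent) (hpS : percent ∉ Sig)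
    {X : Fin K → Fin n → List β} {Y : Fin m → List β}
    (hX : ∀ i j, ∀ c ∈ X i j, c ∈ Sig) (hY : ∀ j, ∀ c ∈ Y j, c ∈ Sig)
    (hYlen : ∀ j, (Y j).length ≤ 2 * ℓ) {w : Fin m → ℕ}
    (hw : ∀ (idx : Fin K → Fin n) (j : Fin m),
      lcsLen ((List.ofFn fun p => X p (idx p)) ++ [Y j]) ≤ w j)
    {Δ : Fin K → ℕ} (hΔ : ∀ p, Δ p ≤ f)
    (hwΔ : ∀ j : Fin m, w j ≤
      lcsLen ((List.ofFn fun p => X p ⟨Δ p + j, by have := hΔ p; omega⟩) ++ [Y j])) :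
    lcsLen ((List.ofFn fun i : Fin K =>
        gadgetAG (K + 1) ℓ dollar percent i.castSucc f (X i)) ++
      [gadgetAG (K + 1) ℓ dollar percent (Fin.last K) f Y]) =
      2 * ℓ * (2 * m + K * n) + ∑ j, w j :=
  le_antisymm (lcsLen_gadgetAG_le hinj hdS hdp hpS hX hY hYlen hw)
    ((Nat.add_le_add_left (Finset.sum_le_sum fun j _ => hwΔ j) _).trans
      (le_lcsLen_gadgetAG hn hΔ))

theorem lcsLen_gadgetSAG {K ℓ f m n : ℕ} (hK : 0 < K) {dollar : Fin (K + 1) → β}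
    {percent atSym : β} {Sig : Set β} {X : Fin K → Fin n → List β} {Y : Fin m → List β}
    (hX : ∀ i j, ∀ c ∈ X i j, c ∈ Sig) (hY : ∀ j, ∀ c ∈ Y j, c ∈ Sig)
    (hda : ∀ i, dollar i ≠ atSym) (hpa : percent ≠ atSym) (haS : atSym ∉ Sig) (D : ℕ) :
    lcsLen ((List.ofFn fun i : Fin K =>
        gadgetSAGx (K + 1) ℓ dollar percent atSym D i.castSucc f (X i)) ++
      [gadgetSAGy (K + 1) ℓ dollar percent atSym D (Fin.last K) f Y]) =
    max (D - 1) (lcsLen ((List.ofFn fun i : Fin K =>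
        gadgetAG (K + 1) ℓ dollar percent i.castSucc f (X i)) ++
      [gadgetAG (K + 1) ℓ dollar percent (Fin.last K) f Y])) := by
  have hatSym : ¬ (atSym ∈ Sig ∨ atSym = percent ∨ ∃ i, atSym = dollar i) := by
    rintro (h | h | ⟨i, h⟩)
    exacts [haS h, hpa h.symm, hda i h.symm]
  exact lcsLen_replicate_append _ ⟨0, hK⟩ (fun h => hatSym (mem_gadgetAG (hX _) h))
    fun h => hatSym (mem_gadgetAG hY h)

end AlignmentGadget

open AlignmentGadget in
theorem basic_alignment_gadget_general
    {β : Type*} {K ℓ m n : ℕ} (hK : 0 < K) (hmn : m ≤ n) {Sig : Set β}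
    {X : Fin K → Fin n → List β} {Y : Fin m → List β} (hYlen : ∀ j, (Y j).length ≤ 2 * ℓ)
    (hX : ∀ i j, ∀ c ∈ X i j, c ∈ Sig) (hY : ∀ j, ∀ c ∈ Y j, c ∈ Sig)
    {dollar : Fin (K + 1) → β} {percent atSym : β} (hinj : Function.Injective dollar)
    (hdp : ∀ i, dollar i ≠ percent) (hda : ∀ i, dollar i ≠ atSym) (hpa : percent ≠ atSym)
    (hdS : ∀ i, dollar i ∉ Sig) (hpS : percent ∉ Sig) (haS : atSym ∉ Sig) {z : ℕ}
    (hz : ∀ (idx : Fin K → Fin n) (j : Fin m),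
      lcsLen ((List.ofFn fun p => X p (idx p)) ++ [Y j]) = z ∨
      lcsLen ((List.ofFn fun p => X p (idx p)) ++ [Y j]) = z + 1)
    {D : ℕ} (hD : D = 2 * ℓ * (2 * m + K * n) + z * m + 1) :
    ((∃ (idx : Fin K → Fin n) (j : Fin m),
        lcsLen ((List.ofFn fun p => X p (idx p)) ++ [Y j]) = z + 1 ∧
        (∀ (idx' : Fin K → Fin n) (j' : Fin m),
          lcsLen ((List.ofFn fun p => X p (idx' p)) ++ [Y j']) = z + 1 → j' = j) ∧
        ∃ Δ : Fin K → ℕ, (∀ p, Δ p ≤ n - m) ∧ ∀ p, (idx p : ℕ) = Δ p + j) →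
      lcsLen ((List.ofFn fun i : Fin K =>
          gadgetSAGx (K + 1) ℓ dollar percent atSym D i.castSucc (n - m) (X i)) ++
        [gadgetSAGy (K + 1) ℓ dollar percent atSym D (Fin.last K) (n - m) Y]) = D) ∧
    ((∀ (idx : Fin K → Fin n) (j : Fin m),
        lcsLen ((List.ofFn fun p => X p (idx p)) ++ [Y j]) ≠ z + 1) →
      lcsLen ((List.ofFn fun i : Fin K =>
          gadgetSAGx (K + 1) ℓ dollar percent atSym D i.castSucc (n - m) (X i)) ++
        [gadgetSAGy (K + 1) ℓ dollar percent atSym D (Fin.last K) (n - m) Y]) = D - 1) := by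
  rw [lcsLen_gadgetSAG hK hX hY hda hpa haS]
  constructor
  · rintro ⟨idx, j, hidx, huniq, Δ, hΔ, hidxΔ⟩
    have hw : ∀ (idx' : Fin K → Fin n) (j' : Fin m),
        lcsLen ((List.ofFn fun p => X p (idx' p)) ++ [Y j']) ≤ z + if j' = j then 1 else 0 := by
      intro idx' j'
      rcases hz idx' j' with h | h
      · exact h.trans_le (Nat.le_add_right _ _)
      · rw [h, if_pos (huniq idx' j' h)]
    have hwΔ : ∀ j' : Fin m, z + (if j' = j then 1 else 0) ≤ lcsLen
        ((List.ofFn fun p => X p ⟨Δ p + j', by have := hΔ p; omega⟩) ++ [Y j']) := by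
      intro j'
      split_ifs with hj
      · subst hj
        simp only [← hidxΔ, hidx, le_refl]
      · rcases hz (fun p => ⟨Δ p + j', by have := hΔ p; omega⟩) j' with h | h <;> omega
    rw [lcsLen_gadgetAG_eq (by omega) hinj hdS hdp hpS hX hY hYlen hw hΔ hwΔ]
    simp only [Finset.sum_add_distrib, Finset.sum_const, Finset.card_univ, Fintype.card_fin,
      smul_eq_mul, Finset.sum_ite_eq', Finset.mem_univ, if_true, mul_comm m z]
    omega
  · intro hne
    have hupper := lcsLen_gadgetAG_le (f := n - m) (w := fun _ => z) hinj hdS hdp hpS hX hY hYlen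
      fun idx j => ((hz idx j).resolve_right (hne idx j)).le
    simp only [Finset.sum_const, Finset.card_univ, Fintype.card_fin, smul_eq_mul,
      mul_comm m z] at hupper
    omega

/-- basic alignment gadget, Theorem `BasicAlignment`. -/
theorem basic_alignment_gadget
    {β : Type*} (k ℓ m n : ℕ) (hk : 2 ≤ k) (hℓ : 1 ≤ ℓ) (hm : 1 ≤ m) (hmn : m < n)
    (Sig : Set β)
    (X : Fin (k - 1) → Fin n → List β) (Y : Fin m → List β)
    (hXlen : ∀ i j, (X i j).length = ℓ) (hYlen : ∀ j, (Y j).length = ℓ)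
    (hXin : ∀ i j, ∀ c ∈ X i j, c ∈ Sig) (hYin : ∀ j, ∀ c ∈ Y j, c ∈ Sig)
    (dollar : Fin k → β) (percent atSym : β)
    (hdinj : Function.Injective dollar)
    (hdp : ∀ i, dollar i ≠ percent) (hda : ∀ i, dollar i ≠ atSym) (hpa : percent ≠ atSym)
    (hdS : ∀ i, dollar i ∉ Sig) (hpS : percent ∉ Sig) (haS : atSym ∉ Sig)
    (z : ℕ)
    (hz : ∀ (idx : Fin (k - 1) → Fin n) (jy : Fin m),
      lcsLen ((List.ofFn fun p => X p (idx p)) ++ [Y jy]) = z ∨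
      lcsLen ((List.ofFn fun p => X p (idx p)) ++ [Y jy]) = z + 1)
    (D : ℕ) (hD : D = 2 * ℓ * (2 * m + (k - 1) * n) + z * m + 1) :
    ((∃ t : (Fin (k - 1) → Fin n) × Fin m,
        (lcsLen ((List.ofFn fun p => X p (t.1 p)) ++ [Y t.2]) = z + 1) ∧
        (∀ t' : (Fin (k - 1) → Fin n) × Fin m,
          lcsLen ((List.ofFn fun p => X p (t'.1 p)) ++ [Y t'.2]) = z + 1 → t' = t) ∧
        (∃ Δ : Fin (k - 1) → ℕ, (∀ p, Δ p ≤ n - m) ∧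
          ∀ p, (t.1 p : ℕ) = Δ p + (t.2 : ℕ))) →
      lcsLen
        ((List.ofFn fun i : Fin (k - 1) =>
            gadgetSAGx k ℓ dollar percent atSym D (i.castLE (Nat.sub_le k 1)) (n - m) (X i))
          ++ [gadgetSAGy k ℓ dollar percent atSym D ⟨k - 1, by omega⟩ (n - m) Y]) = D) ∧
    ((∀ t : (Fin (k - 1) → Fin n) × Fin m,
        lcsLen ((List.ofFn fun p => X p (t.1 p)) ++ [Y t.2]) ≠ z + 1) →
      lcsLen
        ((List.ofFn fun i : Fin (k - 1) =>
            gadgetSAGx k ℓ dollar percent atSym D (i.castLE (Nat.sub_le k 1)) (n - m) (X i))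
          ++ [gadgetSAGy k ℓ dollar percent atSym D ⟨k - 1, by omega⟩ (n - m) Y]) = D - 1) := by
  obtain ⟨K, rfl⟩ : ∃ K, k = K + 1 := ⟨k - 1, by omega⟩
  have hgeneral := basic_alignment_gadget_general (by omega : 0 < K) hmn.le
    (fun j => (hYlen j).trans_le (by omega)) hXin hYin hdinj hdp hda hpa hdS hpS haS hz hD
  refine ⟨fun ⟨t, ht, huniq, hΔ⟩ => hgeneral.1 ⟨t.1, t.2, ht, fun idx j h => ?_, hΔ⟩,
    fun hne => hgeneral.2 fun idx j => hne (idx, j)⟩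
  exact congrArg Prod.snd (huniq (idx, j) h)
end
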